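/- arXiv:math/9705223 — 4 statements merged into one kernel-verified Lean document; each statement's English description precedes it below -/
import Mathlib

section
/- Let n \ge 2 and let a, b be integers with 0 \le a \le b. There exists an integer N (depending on n, a, b) such that for every odd integer q > N: N_B(n,q,-a,b) = N_B(n,q-2na,0,b-a), N_C(n,q,-a,b) = N_C(n,q-2na,0,b-a), and N_D(n,q,-a,b) = N_D(n,q-(2n-2)a,0,b-a). (Note that q - 2na and q - (2n-2)a are again odd.) -/
open Polynomial

/-- `x` avoids the integer interval `[u, v]` in `ZMod q`. -/
def Avoids {q : ℕ} (x : ZMod q) (u v : ℤ) : Prop :=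
  ∀ k : ℤ, u ≤ k → k ≤ v → x ≠ (k : ZMod q)

/-- Count for the type `B` deformation: `x_i`, `x_i - x_j` and `x_i + x_j`
all avoid `[u, v]`. -/
noncomputable def N_B (n q : ℕ) (u v : ℤ) : ℕ :=
  Set.ncard {x : Fin n → ZMod q |
    (∀ i, Avoids (x i) u v) ∧
    ∀ i j : Fin n, i < j → Avoids (x i - x j) u v ∧ Avoids (x i + x j) u v}

/-- Count for the type `C` deformation: `2x_i`, `x_i - x_j` and `x_i + x_j`
all avoid `[u, v]`. -/
noncomputable def N_C (n q : ℕ) (u v : ℤ) : ℕ :=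
  Set.ncard {x : Fin n → ZMod q |
    (∀ i, Avoids (2 * x i) u v) ∧
    ∀ i j : Fin n, i < j → Avoids (x i - x j) u v ∧ Avoids (x i + x j) u v}

/-- Count for the type `BC` deformation: `x_i`, `2x_i`, `x_i - x_j` and `x_i + x_j`
all avoid `[u, v]`. -/
noncomputable def N_BC (n q : ℕ) (u v : ℤ) : ℕ :=
  Set.ncard {x : Fin n → ZMod q |
    (∀ i, Avoids (x i) u v ∧ Avoids (2 * x i) u v) ∧
    ∀ i j : Fin n, i < j → Avoids (x i - x j) u v ∧ Avoids (x i + x j) u v}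

/-- Count for the type `D` deformation: `x_i - x_j` and `x_i + x_j`
avoid `[u, v]`. -/
noncomputable def N_D (n q : ℕ) (u v : ℤ) : ℕ :=
  Set.ncard {x : Fin n → ZMod q |
    ∀ i j : Fin n, i < j → Avoids (x i - x j) u v ∧ Avoids (x i + x j) u v}

/-- `1 + y + y^2 + ... + y^(m-1)`. -/
noncomputable def phi (m : ℕ) : ℚ[X] := ∑ i ∈ Finset.range m, X ^ i

/-- `1 + y^2 + y^4 + ... + y^(2(m-1))`. -/
noncomputable def phi2 (m : ℕ) : ℚ[X] := ∑ i ∈ Finset.range m, X ^ (2 * i)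

/-- For `g = ∑_k g_k y^k`, the sum `∑_k g_k (q - k)^n`. -/
noncomputable def polysum (g : ℚ[X]) (q n : ℕ) : ℚ :=
  ∑ k ∈ Finset.range (g.natDegree + 1), g.coeff k * ((q : ℚ) - (k : ℚ)) ^ n


/-!
For odd `q`, a residue `x_i` is determined by the integer in `(-q, q)` that represents `2 x_i` and
has a prescribed parity. A signed permutation makes these representatives nonnegative and sorted,
that is, moves them into the fundamental alcove, where every condition becomes a strict inequality
`2L < ⟨β, m⟩` for a positive affine root `β` that is a positive root `v` or its complement `δ - v`,
with `L = b` or `L = a` according to the sign that the signed permutation gives to `β`.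

Translating `m` by `t` times the sum of the positive coroots and `q` by `t` times the Coxeter number
increases `⟨β, m⟩` by `2t` times the height of `β`. This is exactly `2t` for simple `β`. Any other
`β` is a sum `γ + γ'` of two such affine roots, and the bound for `β` is at most the larger of the
bounds for `γ` and `γ'`, so its inequality follows from theirs. Hence raising `a` and `b` by `t`
amounts to this translation, and for odd `t` in type `C` it changes the prescribed parity.
-/

/-! ### Classical root systems -/

/-- The types of the root systems that occur in `N_B`, `N_C` and `N_D`. -/
inductive ClassicalType
  | B | C | D

namespace ClassicalType

open Matrix

variable {n : ℕ} {T : ClassicalType}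

/-- The last coordinate of the sum of the positive coroots. -/
def offset : ClassicalType → ℤ
  | B => 2
  | C => 1
  | D => 0

/-- The Coxeter number of the root system of rank `n`. -/
def coxeter (n : ℕ) : ClassicalType → ℕ
  | B => 2 * n
  | C => 2 * n
  | D => 2 * n - 2

/-- The sum `2ρ^∨` of the positive coroots, so that `v ⬝ᵥ T.coweight` is twice the height of a
root `v`. -/
def coweight (T : ClassicalType) (k : Fin n) : ℤ := 2 * (n - 1 - (k : ℕ)) + T.offset

/-- The positive roots, as coefficient vectors of linear forms in `n` coordinates. -/
inductive IsPosRoot (T : ClassicalType) : (Fin n → ℤ) → Prop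
  | sub {i j : Fin n} (hij : i < j) : IsPosRoot T (Pi.single i 1 - Pi.single j 1)
  | add {i j : Fin n} (hij : i < j) : IsPosRoot T (Pi.single i 1 + Pi.single j 1)
  | short (i : Fin n) (hT : T = B) : IsPosRoot T (Pi.single i 1)
  | long (i : Fin n) (hT : T = C) : IsPosRoot T ((2 : ℤ) • Pi.single i 1)

/-- The roots, positive or negative. -/
def IsRoot (T : ClassicalType) (v : Fin n → ℤ) : Prop := T.IsPosRoot v ∨ T.IsPosRoot (-v)

theorem IsPosRoot.isRoot {v : Fin n → ℤ} (hv : T.IsPosRoot v) : T.IsRoot v := Or.inl hv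

theorem IsRoot.neg {v : Fin n → ℤ} (hv : T.IsRoot v) : T.IsRoot (-v) := by
  rwa [IsRoot, neg_neg, or_comm]

theorem isRoot_pair {i j : Fin n} (hij : i ≠ j) (ε δ : ℤˣ) :
    T.IsRoot (Pi.single i (ε : ℤ) + Pi.single j (δ : ℤ)) := by
  wlog hlt : i < j generalizing i j ε δ
  · rw [add_comm]
    exact this hij.symm δ ε (hij.lt_or_gt.resolve_left hlt)
  rcases Int.units_eq_one_or ε with rfl | rfl <;> rcases Int.units_eq_one_or δ with rfl | rfl
  · exact .inl (.add hlt)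
  · exact .inl (by simpa [Pi.single_neg, sub_eq_add_neg] using IsPosRoot.sub (T := T) hlt)
  · exact .inr (by simpa [Pi.single_neg, sub_eq_add_neg, add_comm] using
      IsPosRoot.sub (T := T) hlt)
  · exact .inr (by simpa [Pi.single_neg, add_comm] using IsPosRoot.add (T := T) hlt)

theorem isRoot_single (hT : T = B) (i : Fin n) (ε : ℤˣ) : T.IsRoot (Pi.single i (ε : ℤ)) := by
  rcases Int.units_eq_one_or ε with rfl | rfl
  · exact .inl (.short i hT)
  · exact .inr (by simpa [Pi.single_neg] using IsPosRoot.short i hT)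

theorem isRoot_two_smul_single (hT : T = C) (i : Fin n) (ε : ℤˣ) :
    T.IsRoot ((2 : ℤ) • Pi.single i (ε : ℤ)) := by
  rcases Int.units_eq_one_or ε with rfl | rfl
  · exact .inl (.long i hT)
  · exact .inr (by simpa [Pi.single_neg, ← neg_smul] using IsPosRoot.long i hT)

theorem sign_mul_single_comp_perm (s : Fin n → ℤˣ) (σ : Equiv.Perm (Fin n)) (i k : Fin n) (x : ℤ) :
    s k * (Pi.single i x : Fin n → ℤ) (σ k) =
      (Pi.single (σ.symm i) (x * s (σ.symm i)) : Fin n → ℤ) k := by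
  obtain rfl | hk := eq_or_ne k (σ.symm i)
  · simp [mul_comm]
  · have : σ k ≠ i := fun h => hk (σ.eq_symm_apply.2 h)
    simp [hk, this]

theorem IsPosRoot.isRoot_sign_mul_comp_perm {v : Fin n → ℤ} (hv : T.IsPosRoot v) (s : Fin n → ℤˣ)
    (σ : Equiv.Perm (Fin n)) : T.IsRoot fun k => s k * v (σ k) := by
  cases hv with
  | @sub i j hij =>
    convert isRoot_pair (T := T) (σ.symm.injective.ne hij.ne) (s (σ.symm i)) (-s (σ.symm j))
      using 1
    ext k
    simp [mul_sub, Pi.single_neg, sign_mul_single_comp_perm, ← sub_eq_add_neg]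
  | @add i j hij =>
    convert isRoot_pair (T := T) (σ.symm.injective.ne hij.ne) (s (σ.symm i)) (s (σ.symm j))
      using 1
    ext k
    simp [mul_add, sign_mul_single_comp_perm]
  | short i hT =>
    simpa [sign_mul_single_comp_perm] using isRoot_single hT (σ.symm i) (s (σ.symm i))
  | long i hT =>
    convert isRoot_two_smul_single hT (σ.symm i) (s (σ.symm i)) using 1
    ext k
    simp only [Pi.smul_apply, smul_eq_mul, mul_left_comm _ (2 : ℤ), sign_mul_single_comp_perm,
      one_mul]

theorem IsRoot.sign_mul_comp_perm {v : Fin n → ℤ} (hv : T.IsRoot v) (s : Fin n → ℤˣ)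
    (σ : Equiv.Perm (Fin n)) : T.IsRoot fun k => s k * v (σ k) := by
  rcases hv with hv | hv
  · exact hv.isRoot_sign_mul_comp_perm s σ
  · simpa [Pi.neg_def] using (hv.isRoot_sign_mul_comp_perm s σ).neg

theorem IsPosRoot.dotProduct_coweight_pos {v : Fin n → ℤ} (hv : T.IsPosRoot v) :
    0 < v ⬝ᵥ T.coweight := by
  cases hv <;>
    simp only [sub_dotProduct, add_dotProduct, smul_dotProduct, smul_eq_mul, single_dotProduct,
      coweight] <;>
    cases T <;> simp_all only [offset, reduceCtorEq] <;> omega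

/-! ### Affine roots and heights -/

/-- An affine functional `m ↦ k s + v ⬝ᵥ m`, encoded as the pair `(k, v)`, where `s` is the value
of the imaginary root. -/
abbrev AffineFunctional (n : ℕ) := ℤ × (Fin n → ℤ)

/-- Evaluation of affine functionals at `m`, the imaginary root having the value `s`. -/
def affineEval (s : ℤ) (m : Fin n → ℤ) : AffineFunctional n →+ ℤ where
  toFun β := β.1 * s + β.2 ⬝ᵥ m
  map_zero' := by simp
  map_add' β γ := by simp only [Prod.fst_add, Prod.snd_add, add_dotProduct]; ring

theorem affineEval_finite (s : ℤ) (m v : Fin n → ℤ) : affineEval s m (0, v) = v ⬝ᵥ m := by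
  simp [affineEval]

theorem affineEval_compl (s : ℤ) (m v : Fin n → ℤ) : affineEval s m (1, -v) = s - v ⬝ᵥ m := by
  simp [affineEval, sub_eq_add_neg]

/-- The positive affine roots `v` and `δ - v`, for `v` a positive root and `δ` the imaginary
root. -/
inductive IsPosAffineRoot (T : ClassicalType) : AffineFunctional n → Prop
  | finite {v : Fin n → ℤ} (hv : T.IsPosRoot v) : IsPosAffineRoot T (0, v)
  | compl {v : Fin n → ℤ} (hv : T.IsPosRoot v) : IsPosAffineRoot T (1, -v)

/-- Twice the height of an affine functional, the imaginary root having the Coxeter number as its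
height. -/
def affineHeight (T : ClassicalType) : AffineFunctional n →+ ℤ :=
  affineEval (2 * T.coxeter n) T.coweight

/-- A functional of height one or a sum of two positive affine roots: the case distinction for
induction on the height. -/
def IsSimpleOrSum (T : ClassicalType) (β : AffineFunctional n) : Prop :=
  T.affineHeight β = 2 ∨ ∃ γ δ, T.IsPosAffineRoot γ ∧ T.IsPosAffineRoot δ ∧ β = γ + δ

theorem affineHeight_finite (v : Fin n → ℤ) : T.affineHeight (0, v) = v ⬝ᵥ T.coweight :=
  affineEval_finite _ _ v

theorem affineHeight_compl (v : Fin n → ℤ) :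
    T.affineHeight (1, -v) = 2 * T.coxeter n - v ⬝ᵥ T.coweight :=
  affineEval_compl _ _ v

theorem IsPosAffineRoot.affineHeight_pos {β : AffineFunctional n} (hβ : T.IsPosAffineRoot β) :
    0 < T.affineHeight β := by
  cases hβ with
  | finite hv => simpa only [affineHeight_finite] using hv.dotProduct_coweight_pos
  | compl hv =>
    rw [affineHeight_compl]
    cases hv <;>
      simp only [sub_dotProduct, add_dotProduct, smul_dotProduct, smul_eq_mul, single_dotProduct,
        coweight] <;>
      cases T <;> simp_all only [offset, coxeter, reduceCtorEq] <;> omega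

theorem exists_gt_or_last (i : Fin n) : (∃ k, i < k) ∨ (i : ℕ) + 1 = n := by
  by_cases h : (i : ℕ) + 1 < n
  · exact .inl ⟨⟨i + 1, h⟩, by simp [Fin.lt_def]⟩
  · exact .inr (by omega)

theorem exists_lt_or_first (i : Fin n) : (∃ k, k < i) ∨ (i : ℕ) = 0 := by
  by_cases h : (i : ℕ) = 0
  · exact .inr h
  · exact .inl ⟨⟨0, i.pos⟩, by simp only [Fin.lt_def]; omega⟩

theorem exists_between_or_succ {i j : Fin n} (hij : i < j) :
    (∃ k, i < k ∧ k < j) ∨ (j : ℕ) = i + 1 := by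
  by_cases h : (j : ℕ) = i + 1
  · exact .inr h
  · exact .inl ⟨⟨i + 1, by omega⟩, by simp only [Fin.lt_def] at *; omega⟩

theorem isSimpleOrSum_finite_of_add {u v w : Fin n → ℤ} (hu : T.IsPosRoot u) (hv : T.IsPosRoot v)
    (hw : w = u + v) : T.IsSimpleOrSum (0, w) :=
  .inr ⟨_, _, .finite hu, .finite hv, by simp [hw]⟩

theorem isSimpleOrSum_compl_of_add {u v w : Fin n → ℤ} (hu : T.IsPosRoot u) (hv : T.IsPosRoot v)
    (hw : w + u = v) : T.IsSimpleOrSum (1, -w) :=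
  .inr ⟨_, _, .finite hu, .compl hv, by simp [← hw]⟩

theorem isSimpleOrSum_sub {i j : Fin n} (hij : i < j) :
    T.IsSimpleOrSum (0, Pi.single i 1 - Pi.single j 1) := by
  rcases exists_between_or_succ hij with ⟨k, hik, hkj⟩ | hj
  · exact isSimpleOrSum_finite_of_add (.sub hik) (.sub hkj) (by module)
  · left
    simp only [affineHeight_finite, sub_dotProduct, single_dotProduct, coweight]
    omega

theorem isSimpleOrSum_add {i j : Fin n} (hij : i < j) :
    T.IsSimpleOrSum (0, Pi.single i 1 + Pi.single j 1) := by
  cases hT : T with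
  | B => exact isSimpleOrSum_finite_of_add (.short i rfl) (.short j rfl) (by module)
  | C =>
    exact isSimpleOrSum_finite_of_add (.sub hij) (.long j rfl) (by module)
  | D =>
    rcases exists_gt_or_last j with ⟨l, hjl⟩ | hj
    · exact isSimpleOrSum_finite_of_add (.sub hjl) (.add (hij.trans hjl)) (by module)
    rcases exists_between_or_succ hij with ⟨k, hik, hkj⟩ | hj'
    · exact isSimpleOrSum_finite_of_add (.sub hik) (.add hkj) (by module)
    left
    simp only [affineHeight_finite, add_dotProduct, single_dotProduct, coweight, offset]
    omega

theorem isSimpleOrSum_short (hT : T = B) (i : Fin n) :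
    T.IsSimpleOrSum (0, Pi.single i 1) := by
  rcases exists_gt_or_last i with ⟨l, hil⟩ | hi
  · exact isSimpleOrSum_finite_of_add (.sub hil) (.short l hT) (by module)
  · left
    simp only [affineHeight_finite, single_dotProduct, coweight, hT, offset]
    omega

theorem isSimpleOrSum_long (hT : T = C) (i : Fin n) :
    T.IsSimpleOrSum (0, (2 : ℤ) • Pi.single i 1) := by
  rcases exists_gt_or_last i with ⟨l, hil⟩ | hi
  · exact isSimpleOrSum_finite_of_add (.sub hil) (.add hil) (by module)
  · left
    simp only [affineHeight_finite, smul_dotProduct, smul_eq_mul, single_dotProduct, coweight, hT,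
      offset]
    omega

theorem isSimpleOrSum_compl_sub {i j : Fin n} (hij : i < j) :
    T.IsSimpleOrSum (1, -(Pi.single i 1 - Pi.single j 1)) := by
  cases hT : T with
  | B => exact isSimpleOrSum_compl_of_add (.short j rfl) (.short i rfl) (by module)
  | C => exact isSimpleOrSum_compl_of_add (.long j rfl) (.add hij) (by module)
  | D =>
    rcases exists_lt_or_first i with ⟨k, hki⟩ | hi
    · exact isSimpleOrSum_compl_of_add (.sub hki) (.sub (hki.trans hij)) (by module)
    rcases exists_gt_or_last j with ⟨l, hjl⟩ | hj
    · exact isSimpleOrSum_compl_of_add (.sub hjl) (.sub (hij.trans hjl)) (by module)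
    rcases exists_between_or_succ hij with ⟨k, hik, hkj⟩ | hj'
    · exact isSimpleOrSum_compl_of_add (.add hkj) (.add hik) (by module)
    left
    simp only [affineHeight_compl, sub_dotProduct, single_dotProduct, coweight, coxeter]
    omega

theorem isSimpleOrSum_compl_add {i j : Fin n} (hij : i < j) :
    T.IsSimpleOrSum (1, -(Pi.single i 1 + Pi.single j 1)) := by
  rcases exists_lt_or_first i with ⟨k, hki⟩ | hi
  · exact isSimpleOrSum_compl_of_add (.sub hki) (.add (hki.trans hij)) (by module)
  rcases exists_between_or_succ hij with ⟨k, hik, hkj⟩ | hj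
  · exact isSimpleOrSum_compl_of_add (.sub hkj) (.add hik) (by module)
  cases hT : T with
  | C => exact isSimpleOrSum_compl_of_add (.sub hij) (.long i rfl) (by module)
  | _ =>
    left
    simp only [affineHeight_compl, add_dotProduct, single_dotProduct, coweight, offset, coxeter]
    omega

theorem isSimpleOrSum_compl_short (hT : T = B) (i : Fin n) :
    T.IsSimpleOrSum (1, -Pi.single i 1) := by
  rcases exists_gt_or_last i with ⟨l, hil⟩ | hi
  · exact isSimpleOrSum_compl_of_add (.short l hT) (.add hil) (by module)
  rcases exists_lt_or_first i with ⟨k, hki⟩ | hi'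
  · exact isSimpleOrSum_compl_of_add (.short k hT) (.add hki) (by module)
  left
  simp only [affineHeight_compl, single_dotProduct, coweight, hT, offset, coxeter]
  omega

theorem isSimpleOrSum_compl_long (hT : T = C) (i : Fin n) :
    T.IsSimpleOrSum (1, -((2 : ℤ) • Pi.single i 1)) := by
  rcases exists_lt_or_first i with ⟨k, hki⟩ | hi
  · exact isSimpleOrSum_compl_of_add (.sub hki) (.add hki) (by module)
  · left
    simp only [affineHeight_compl, smul_dotProduct, smul_eq_mul, single_dotProduct, coweight, hT,
      offset, coxeter]
    omega

theorem IsPosAffineRoot.isSimpleOrSum {β : AffineFunctional n} (hβ : T.IsPosAffineRoot β) :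
    T.IsSimpleOrSum β := by
  cases hβ with
  | finite hv =>
    cases hv with
    | sub hij => exact isSimpleOrSum_sub hij
    | add hij => exact isSimpleOrSum_add hij
    | short i hT => exact isSimpleOrSum_short hT i
    | long i hT => exact isSimpleOrSum_long hT i
  | compl hv =>
    cases hv with
    | sub hij => exact isSimpleOrSum_compl_sub hij
    | add hij => exact isSimpleOrSum_compl_add hij
    | short i hT => exact isSimpleOrSum_compl_short hT i
    | long i hT => exact isSimpleOrSum_compl_long hT i

/-! ### Points in the fundamental alcove -/

/-- The upper end of the interval `[0, L]` to be avoided by a root with value `x` at a reference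
point: a positive root `v` avoids `[-A, B]` if and only if `v` avoids `[0, B]` and `-v` avoids
`[0, A]`. -/
def threshold (A B x : ℤ) : ℤ := if 0 < x then B else A

theorem threshold_add_le_max {A B : ℤ} (hAB : A ≤ B) (x y : ℤ) :
    threshold A B (x + y) ≤ max (threshold A B x) (threshold A B y) := by
  unfold threshold
  grind

theorem threshold_add_const (A B x t : ℤ) :
    threshold (A + t) (B + t) x = threshold A B x + t := by
  unfold threshold
  split_ifs <;> rfl

theorem threshold_nonneg {A B : ℤ} (hA : 0 ≤ A) (hB : 0 ≤ B) (x : ℤ) : 0 ≤ threshold A B x := by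
  unfold threshold
  split_ifs <;> assumption

/-- Along a sum, the height adds up while the bound `L` only takes a maximum, so the simple
elements are the only ones for which a shift by `t` costs as much as it gains. -/
theorem two_mul_add_lt_of_simple_or_sum {M : Type*} [AddZeroClass M] {R : M → Prop}
    {ht val : M →+ ℤ} {L : M → ℤ} {t : ℤ}
    (hsplit : ∀ β, R β → ht β = 2 ∨ ∃ γ δ, R γ ∧ R δ ∧ β = γ + δ)
    (hpos : ∀ β, R β → 0 < ht β) (hmax : ∀ β γ, L (β + γ) ≤ max (L β) (L γ))
    (hL : ∀ β, 0 ≤ L β + t) (hval : ∀ β, R β → 2 * L β < val β) (β : M) (hβ : R β) :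
    2 * (L β + t) < val β + t * ht β := by
  induction hk : (ht β).toNat using Nat.strong_induction_on generalizing β with
  | _ k ih =>
    rcases hsplit β hβ with hsimple | ⟨γ, δ, hγ, hδ, rfl⟩
    · have := hval β hβ
      rw [hsimple]
      linarith
    · have hγ_pos := hpos γ hγ
      have hδ_pos := hpos δ hδ
      simp only [map_add] at hk ⊢
      have hγ_lt := ih _ (by omega) γ hγ rfl
      have hδ_lt := ih _ (by omega) δ hδ rfl
      have := hL γ
      have := hL δ
      rw [mul_add]
      rcases le_max_iff.1 (hmax γ δ) with hle | hle <;> linarith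

/-- The point `m` of the alcove keeps the distance from the wall of each positive affine root that
is prescribed by the reference point `l`. Values at `m` belong to doubled coordinates, whence the
factors `2`. -/
def AlcoveBound (T : ClassicalType) (q A B : ℤ) (l m : Fin n → ℤ) : Prop :=
  ∀ β, T.IsPosAffineRoot β → 2 * threshold A B (β.2 ⬝ᵥ l) < affineEval (2 * q) m β

theorem affineEval_add_smul_coweight (q t : ℤ) (m : Fin n → ℤ) (β : AffineFunctional n) :
    affineEval (2 * (q + t * T.coxeter n)) (m + t • T.coweight) β =
      affineEval (2 * q) m β + t * T.affineHeight β := by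
  simp only [affineHeight, affineEval, AddMonoidHom.coe_mk, ZeroHom.coe_mk, dotProduct_add,
    dotProduct_smul, smul_eq_mul]
  ring

section AlcoveBound

variable {q A B t : ℤ} {l m : Fin n → ℤ}

theorem AlcoveBound.shift (h : T.AlcoveBound q A B l m) (hAB : A ≤ B) (hAt : 0 ≤ A + t) :
    T.AlcoveBound (q + t * T.coxeter n) (A + t) (B + t) l (m + t • T.coweight) := by
  have hmax (γ δ : AffineFunctional n) : threshold A B ((γ + δ).2 ⬝ᵥ l) ≤
      max (threshold A B (γ.2 ⬝ᵥ l)) (threshold A B (δ.2 ⬝ᵥ l)) := by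
    rw [Prod.snd_add, add_dotProduct]
    exact threshold_add_le_max hAB _ _
  have hnonneg (γ : AffineFunctional n) : 0 ≤ threshold A B (γ.2 ⬝ᵥ l) + t := by
    rw [← threshold_add_const]
    exact threshold_nonneg hAt (hAt.trans (add_le_add_left hAB t)) _
  intro β hβ
  rw [threshold_add_const, affineEval_add_smul_coweight]
  exact two_mul_add_lt_of_simple_or_sum (fun _ hγ => hγ.isSimpleOrSum)
    (fun _ hγ => hγ.affineHeight_pos) hmax hnonneg h β hβ

theorem alcoveBound_iff : T.AlcoveBound q A B l m ↔ ∀ v, T.IsPosRoot v →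
    2 * threshold A B (v ⬝ᵥ l) < v ⬝ᵥ m ∧ 2 * threshold A B (-v ⬝ᵥ l) < 2 * q - v ⬝ᵥ m := by
  refine ⟨fun h v hv => ⟨?_, ?_⟩, fun h β hβ => ?_⟩
  · exact (h _ (.finite hv)).trans_eq (affineEval_finite _ _ v)
  · exact (h _ (.compl hv)).trans_eq (affineEval_compl _ _ v)
  · cases hβ with
    | finite hv => exact (h _ hv).1.trans_eq (affineEval_finite _ _ _).symm
    | compl hv => exact (h _ hv).2.trans_eq (affineEval_compl _ _ _).symm

theorem AlcoveBound.dotProduct_pos (h : T.AlcoveBound q A B l m) (hA : 0 ≤ A) (hB : 0 ≤ B)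
    {v : Fin n → ℤ} (hv : T.IsPosRoot v) : 0 < v ⬝ᵥ m ∧ v ⬝ᵥ m < 2 * q := by
  have := alcoveBound_iff.1 h v hv
  have := threshold_nonneg hA hB (v ⬝ᵥ l)
  have := threshold_nonneg hA hB (-v ⬝ᵥ l)
  constructor <;> linarith

theorem AlcoveBound.strictAnti (h : T.AlcoveBound q A B l m) (hA : 0 ≤ A) (hB : 0 ≤ B) :
    StrictAnti m := fun i j hij => by
  simpa [sub_dotProduct] using (h.dotProduct_pos hA hB (.sub hij)).1

theorem AlcoveBound.pos_of_ne_D (h : T.AlcoveBound q A B l m) (hA : 0 ≤ A) (hB : 0 ≤ B)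
    (hT : T ≠ D) (k : Fin n) : 0 < m k := by
  cases hT' : T with
  | B => simpa using (h.dotProduct_pos hA hB (.short k hT')).1
  | C => simpa [smul_dotProduct, -zsmul_eq_mul] using (h.dotProduct_pos hA hB (.long k hT')).1
  | D => exact absurd hT' hT

end AlcoveBound

/-- No member of the arithmetic progression `D, D - 2, …, D - 2L` is divisible by `q`. For the
residue `y` of `D / 2` modulo an odd `q` this says that `y` avoids `[0, L]`. -/
def Clears (q L D : ℤ) : Prop := ∀ k, 0 ≤ k → k ≤ L → ¬q ∣ D - 2 * k

theorem clears_and_clears_neg_iff {q L L' D : ℤ} (hq : Odd q) (hD : Even D) (hL : 0 ≤ L)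
    (hD₀ : 0 ≤ D) (hDq : D < 2 * q) :
    Clears q L D ∧ Clears q L' (-D) ↔ 2 * L < D ∧ 2 * L' < 2 * q - D := by
  obtain ⟨d, rfl⟩ := hD
  constructor
  · rintro ⟨h, h'⟩
    refine ⟨?_, ?_⟩
    · by_contra! hle
      exact h d (by omega) (by omega) ⟨0, by ring⟩
    · by_contra! hle
      exact h' (q - d) (by omega) (by omega) ⟨-2, by ring⟩
  · -- In both cases the multiple of `q` would be even and strictly between `0` and `±2q`.
    rintro ⟨h, h'⟩
    have not_dvd {E : ℤ} (hE₀ : 0 < E) (hEq : E < 2 * q) (hE : Even E) : ¬q ∣ E := by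
      rintro ⟨c, rfl⟩
      obtain rfl : c = 1 := by nlinarith
      exact Int.not_even_iff_odd.2 hq (by simpa using hE)
    refine ⟨fun k hk hkL => not_dvd (by omega) (by omega) (by simp [Int.even_sub]),
      fun k hk hkL hdvd => ?_⟩
    refine not_dvd (E := d + d + 2 * k) (by omega) (by omega) (by simp [Int.even_add]) ?_
    exact (dvd_neg.2 hdvd).trans (dvd_of_eq (by ring))

/-- Every root value at `Z` clears the threshold given by the value of the root at the reference
point `l`. Having `l` as a parameter makes the condition invariant under signed permutations. -/
def RootAvoiding (T : ClassicalType) (q A B : ℤ) (l Z : Fin n → ℤ) : Prop :=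
  ∀ v, T.IsRoot v → Clears q (threshold A B (v ⬝ᵥ l)) (v ⬝ᵥ Z)

section RootAvoiding

variable {q p A B : ℤ} {l m Z : Fin n → ℤ}

theorem rootAvoiding_iff_forall_isPosRoot : T.RootAvoiding q A B l Z ↔ ∀ v, T.IsPosRoot v →
    Clears q (threshold A B (v ⬝ᵥ l)) (v ⬝ᵥ Z) ∧
      Clears q (threshold A B (-v ⬝ᵥ l)) (-(v ⬝ᵥ Z)) := by
  constructor
  · intro h v hv
    exact ⟨h v hv.isRoot, by simpa only [neg_dotProduct] using h (-v) hv.isRoot.neg⟩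
  · rintro h v (hv | hv)
    · exact (h v hv).1
    · simpa only [neg_dotProduct, neg_neg] using (h (-v) hv).2

theorem RootAvoiding.sign_mul_comp_perm (h : T.RootAvoiding q A B l Z) (s : Fin n → ℤˣ)
    (σ : Equiv.Perm (Fin n)) :
    T.RootAvoiding q A B (fun k => s k * l (σ k)) (fun k => s k * Z (σ k)) := by
  intro v hv
  have hdot (w : Fin n → ℤ) : v ⬝ᵥ (fun k => s k * w (σ k)) =
      (fun i => (s (σ.symm i) : ℤ) * v (σ.symm i)) ⬝ᵥ w := by
    simp only [dotProduct]
    refine Fintype.sum_equiv σ _ _ fun k => ?_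
    simp only [Equiv.symm_apply_apply]
    ring
  rw [hdot, hdot]
  exact h _ (hv.sign_mul_comp_perm (s ∘ σ.symm) σ.symm)

theorem rootAvoiding_sign_mul_comp_perm_iff (s : Fin n → ℤˣ) (σ : Equiv.Perm (Fin n)) :
    T.RootAvoiding q A B (fun k => s k * l (σ k)) (fun k => s k * Z (σ k)) ↔
      T.RootAvoiding q A B l Z := by
  refine ⟨fun h => ?_, fun h => h.sign_mul_comp_perm s σ⟩
  simpa [← mul_assoc, ← Units.val_mul] using h.sign_mul_comp_perm (s ∘ σ.symm) σ.symm

theorem RootAvoiding.injective_abs (h : T.RootAvoiding q A B l Z) (hA : 0 ≤ A) (hB : 0 ≤ B) :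
    Function.Injective fun i => |Z i| := by
  intro i j hij
  by_contra hne
  have not_dvd {v : Fin n → ℤ} (hv : T.IsRoot v) : ¬q ∣ v ⬝ᵥ Z := by
    simpa using h v hv 0 le_rfl (threshold_nonneg hA hB _)
  rcases abs_eq_abs.1 hij with hZ | hZ
  · exact not_dvd (isRoot_pair hne 1 (-1)) (by simp [add_dotProduct, hZ])
  · exact not_dvd (isRoot_pair hne 1 1) (by simp [add_dotProduct, hZ])

theorem IsPosRoot.even_dotProduct {v : Fin n → ℤ} (hv : T.IsPosRoot v) (hp : T = C ∨ Even p)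
    (hm : ∀ k, m k ≡ p [ZMOD 2]) : Even (v ⬝ᵥ m) := by
  have parity (k : Fin n) : Even (m k) ↔ Even p := by
    simp only [Int.even_iff, (hm k).eq]
  cases hv with
  | sub => simp [sub_dotProduct, Int.even_sub, parity]
  | add => simp [add_dotProduct, Int.even_add, parity]
  | short i hT => simpa [parity] using hp.resolve_left (by simp [hT])
  | long => simp [smul_dotProduct, -zsmul_eq_mul]

theorem IsPosRoot.dotProduct_mem_Ico {v : Fin n → ℤ} (hv : T.IsPosRoot v) (hm : StrictAnti m)
    (hm₀ : ∀ k, 0 ≤ m k) (hmq : ∀ k, m k < q) : v ⬝ᵥ m ∈ Set.Ico 0 (2 * q) := by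
  have bounds (k : Fin n) : m k ∈ Set.Ico 0 q := ⟨hm₀ k, hmq k⟩
  cases hv with
  | @sub i j hij =>
    have := hm hij
    have := bounds i
    have := bounds j
    simp only [sub_dotProduct, single_dotProduct, Set.mem_Ico] at *
    omega
  | @add i j hij =>
    have := bounds i
    have := bounds j
    simp only [add_dotProduct, single_dotProduct, Set.mem_Ico] at *
    omega
  | short i | long i =>
    have := bounds i
    simp only [smul_dotProduct, smul_eq_mul, single_dotProduct, Set.mem_Ico] at *
    omega

theorem rootAvoiding_iff_alcoveBound (hq : Odd q) (hA : 0 ≤ A) (hB : 0 ≤ B) (hp : T = C ∨ Even p)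
    (hm : StrictAnti m) (hm₀ : ∀ k, 0 ≤ m k) (hmq : ∀ k, m k < q) (hmp : ∀ k, m k ≡ p [ZMOD 2]) :
    T.RootAvoiding q A B l m ↔ T.AlcoveBound q A B l m := by
  rw [rootAvoiding_iff_forall_isPosRoot, alcoveBound_iff]
  refine forall₂_congr fun v hv => ?_
  have hv_mem := hv.dotProduct_mem_Ico hm hm₀ hmq
  exact clears_and_clears_neg_iff hq (hv.even_dotProduct hp hmp) (threshold_nonneg hA hB _)
    hv_mem.1 hv_mem.2

end RootAvoiding

/-- The integer points `m` of the fundamental alcove with coordinates of parity `p` in `[0, q)` that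
keep the distances from the walls prescribed by `l`. -/
structure InAlcove (T : ClassicalType) (p q A B : ℤ) (l m : Fin n → ℤ) : Prop where
  nonneg : ∀ k, 0 ≤ m k
  lt : ∀ k, m k < q
  modEq : ∀ k, m k ≡ p [ZMOD 2]
  alcoveBound : T.AlcoveBound q A B l m

section InAlcove

variable {p p' q A B t : ℤ} {l m : Fin n → ℤ}

theorem coweight_modEq (T : ClassicalType) (k : Fin n) : T.coweight k ≡ T.offset [ZMOD 2] := by
  simp [coweight]

theorem AlcoveBound.nonneg (h : T.AlcoveBound q A B l m) (hA : 0 ≤ A) (hB : 0 ≤ B)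
    (hlast : T = D → ∀ k : Fin n, (k : ℕ) + 1 = n → 0 ≤ m k) (k : Fin n) : 0 ≤ m k := by
  by_cases hT : T = D
  · have hk : k ≤ ⟨n - 1, Nat.sub_one_lt_of_lt k.isLt⟩ := Fin.mk_le_mk.2 (by omega)
    exact (hlast hT _ (by simp only; omega)).trans ((h.strictAnti hA hB).antitone hk)
  · exact (h.pos_of_ne_D hA hB hT k).le

theorem AlcoveBound.lt (h : T.AlcoveBound q A B l m) (hA : 0 ≤ A) (hB : 0 ≤ B)
    (hfirst : T ≠ C → ∀ k : Fin n, (k : ℕ) = 0 → m k < q) (k : Fin n) : m k < q := by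
  by_cases hT : T = C
  · simpa [smul_dotProduct, -zsmul_eq_mul] using (h.dotProduct_pos hA hB (.long k hT)).2
  · have hk : ⟨0, k.pos⟩ ≤ k := Fin.mk_le_mk.2 (Nat.zero_le _)
    exact ((h.strictAnti hA hB).antitone hk).trans_lt (hfirst hT _ rfl)

theorem InAlcove.shift (h : T.InAlcove p q A B l m) (hAB : A ≤ B) (hAt : 0 ≤ A + t)
    (hp : p' ≡ p + t * T.offset [ZMOD 2]) :
    T.InAlcove p' (q + t * T.coxeter n) (A + t) (B + t) l (m + t • T.coweight) := by
  have hbound := h.alcoveBound.shift hAB hAt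
  have hBt : 0 ≤ B + t := by omega
  refine ⟨hbound.nonneg hAt hBt fun hT k hk => ?_, hbound.lt hAt hBt fun hT k hk => ?_,
    fun k => ((h.modEq k).add ((coweight_modEq T k).mul_left t)).trans hp.symm, hbound⟩
  · have hcoweight : T.coweight k = 0 := by
      simp only [coweight, hT, offset]
      omega
    simpa [hcoweight] using h.nonneg k
  · have hcoweight : T.coweight k = T.coxeter n := by
      cases T <;> simp_all only [coweight, offset, coxeter] <;> grind
    simpa [hcoweight] using h.lt k

theorem InAlcove.coweight_eq_zero (h : T.InAlcove p q A B l m) (hA : 0 ≤ A) (hB : 0 ≤ B)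
    {k : Fin n} (hk : m k = 0) : T.coweight k = 0 := by
  have hT : T = D := by
    by_contra hT
    exact (h.alcoveBound.pos_of_ne_D hA hB hT k).ne' hk
  have hlast : (k : ℕ) + 1 = n := by
    refine (exists_gt_or_last k).resolve_left fun ⟨j, hkj⟩ => ?_
    exact (h.nonneg j).not_gt (hk ▸ h.alcoveBound.strictAnti hA hB hkj)
  simp only [coweight, hT, offset]
  omega

end InAlcove

/-! ### Sorting by signed permutations -/

/-- For odd `q`, the representatives with coordinates of parity `p` in `(-q, q)` of the points `2x`
such that the positive roots avoid `[-A, B]` at `x`. -/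
def doubledReps (T : ClassicalType) (n : ℕ) (p q A B : ℤ) : Set (Fin n → ℤ) :=
  {Z | (∀ i, |Z i| < q) ∧ (∀ i, Z i ≡ p [ZMOD 2]) ∧ T.RootAvoiding q A B T.coweight Z}

/-- The points of `doubledReps` moved into the dominant chamber, each as a triple of signs `s`, a
permutation `σ` and a decreasing `m` such that the point is `i ↦ s (σ⁻¹ i) * m (σ⁻¹ i)`. Signs of
vanishing coordinates are normalized to `1`. -/
def chamberData (T : ClassicalType) (n : ℕ) (p q A B : ℤ) :
    Set ((Fin n → ℤˣ) × Equiv.Perm (Fin n) × (Fin n → ℤ)) :=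
  {c | (∀ k, c.2.2 k = 0 → c.1 k = 1) ∧
    T.InAlcove p q A B (fun k => c.1 k * T.coweight (c.2.1 k)) c.2.2}

/-- The point of `doubledReps` from which a triple in `chamberData` arises. -/
def unfoldChamber (c : (Fin n → ℤˣ) × Equiv.Perm (Fin n) × (Fin n → ℤ)) (i : Fin n) : ℤ :=
  c.1 (c.2.1.symm i) * c.2.2 (c.2.1.symm i)

section Counting

variable {p p' q A B t : ℤ}

theorem unfoldChamber_perm_apply (s : Fin n → ℤˣ) (σ : Equiv.Perm (Fin n)) (m : Fin n → ℤ)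
    (k : Fin n) : unfoldChamber (s, σ, m) (σ k) = s k * m k := by
  simp [unfoldChamber]

theorem abs_sign_mul (s : ℤˣ) (x : ℤ) : |(s : ℤ) * x| = |x| := by
  rcases Int.units_eq_one_or s with rfl | rfl <;> simp

theorem sign_mul_modEq (s : ℤˣ) (x : ℤ) : (s : ℤ) * x ≡ x [ZMOD 2] := by
  rcases Int.units_eq_one_or s with rfl | rfl
  · simp
  · simp [Int.modEq_iff_dvd, ← two_mul]

theorem exists_sign_mul_abs (x : ℤ) : ∃ s : ℤˣ, (s : ℤ) * x = |x| ∧ (x = 0 → s = 1) := by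
  rcases le_or_gt 0 x with hx | hx
  · exact ⟨1, by simp [abs_of_nonneg hx], fun _ => rfl⟩
  · exact ⟨-1, by simp [abs_of_neg hx], fun h => absurd h hx.ne⟩

theorem perm_eq_of_strictAnti {f : Fin n → ℤ} {σ τ : Equiv.Perm (Fin n)}
    (hσ : StrictAnti (f ∘ σ)) (hτ : StrictAnti (f ∘ τ)) : σ = τ := by
  have hf : Function.Injective f := σ.injective_comp f |>.1 hσ.injective
  have := Tuple.unique_antitone hσ.antitone hτ.antitone
  exact Equiv.ext fun k => hf (congrFun this k)

theorem injOn_unfoldChamber (hA : 0 ≤ A) (hB : 0 ≤ B) :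
    Set.InjOn unfoldChamber (T.chamberData n p q A B) := by
  have abs_comp {s : Fin n → ℤˣ} {σ m} (hc : (s, σ, m) ∈ T.chamberData n p q A B) :
      (fun i => |unfoldChamber (s, σ, m) i|) ∘ σ = m := by
    ext k
    simp only [Function.comp_apply, unfoldChamber_perm_apply, abs_sign_mul]
    exact abs_of_nonneg (hc.2.nonneg k)
  rintro ⟨s, σ, m⟩ hc ⟨s', σ', m'⟩ hc' heq
  have hm := abs_comp hc
  have hm' := abs_comp hc'
  rw [← heq] at hm'
  obtain rfl : σ = σ' := by
    refine perm_eq_of_strictAnti (f := fun i => |unfoldChamber (s, σ, m) i|) ?_ ?_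
    · exact hm.symm ▸ hc.2.alcoveBound.strictAnti hA hB
    · exact hm'.symm ▸ hc'.2.alcoveBound.strictAnti hA hB
  obtain rfl : m = m' := hm.symm.trans hm'
  obtain rfl : s = s' := by
    ext1 k
    have hk := congrFun heq (σ k)
    simp only [unfoldChamber_perm_apply] at hk
    rcases eq_or_ne (m k) 0 with hmk | hmk
    · exact (hc.1 k hmk).trans (hc'.1 k hmk).symm
    · exact Units.ext (mul_right_cancel₀ hmk hk)
  rfl

theorem unfoldChamber_mem_doubledReps_iff (hq : Odd q) (hA : 0 ≤ A) (hB : 0 ≤ B)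
    (hp : T = C ∨ Even p) {s : Fin n → ℤˣ} {σ : Equiv.Perm (Fin n)} {m : Fin n → ℤ}
    (hm : StrictAnti m) (hm₀ : ∀ k, 0 ≤ m k) :
    unfoldChamber (s, σ, m) ∈ T.doubledReps n p q A B ↔
      T.InAlcove p q A B (fun k => s k * T.coweight (σ k)) m := by
  have hunfold : (fun k => (s k : ℤ) * unfoldChamber (s, σ, m) (σ k)) = m := by
    ext k
    simp [unfoldChamber_perm_apply, ← mul_assoc, ← Units.val_mul]
  have habs : (∀ i, |unfoldChamber (s, σ, m) i| < q) ↔ ∀ k, m k < q := by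
    rw [← σ.forall_congr_right]
    simp only [unfoldChamber_perm_apply, abs_sign_mul, abs_of_nonneg (hm₀ _)]
  have hmod : (∀ i, unfoldChamber (s, σ, m) i ≡ p [ZMOD 2]) ↔ ∀ k, m k ≡ p [ZMOD 2] := by
    rw [← σ.forall_congr_right]
    simp only [unfoldChamber_perm_apply, Int.ModEq, (sign_mul_modEq _ _).eq]
  rw [doubledReps, Set.mem_ofPred_eq, habs, hmod, ← rootAvoiding_sign_mul_comp_perm_iff s σ,
    hunfold]
  constructor
  · rintro ⟨hmq, hmp, h⟩
    exact ⟨hm₀, hmq, hmp, (rootAvoiding_iff_alcoveBound hq hA hB hp hm hm₀ hmq hmp).1 h⟩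
  · rintro ⟨-, hmq, hmp, h⟩
    exact ⟨hmq, hmp, (rootAvoiding_iff_alcoveBound hq hA hB hp hm hm₀ hmq hmp).2 h⟩

theorem bijOn_unfoldChamber (hq : Odd q) (hA : 0 ≤ A) (hB : 0 ≤ B) (hp : T = C ∨ Even p) :
    Set.BijOn unfoldChamber (T.chamberData n p q A B) (T.doubledReps n p q A B) := by
  refine ⟨fun ⟨s, σ, m⟩ hc => ?_, injOn_unfoldChamber hA hB, fun Z hZ => ?_⟩
  · exact (unfoldChamber_mem_doubledReps_iff hq hA hB hp (hc.2.alcoveBound.strictAnti hA hB)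
      hc.2.nonneg).2 hc.2
  · let σ := Tuple.sort fun i => -|Z i|
    choose s hs hs_one using fun k => exists_sign_mul_abs (Z (σ k))
    let m k := |Z (σ k)|
    have hm : StrictAnti m := by
      refine Antitone.strictAnti_of_injective (fun i j hij => ?_)
        ((hZ.2.2.injective_abs hA hB).comp σ.injective)
      exact neg_le_neg_iff.1 (Tuple.monotone_sort (fun i => -|Z i|) hij)
    have hunfold : unfoldChamber (s, σ, m) = Z := by
      ext i
      obtain ⟨k, rfl⟩ := σ.surjective i
      rw [unfoldChamber_perm_apply]
      simp [m, ← hs, ← mul_assoc, ← Units.val_mul]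
    refine ⟨(s, σ, m), ⟨fun k hk => hs_one k (abs_eq_zero.1 hk), ?_⟩, hunfold⟩
    rw [← unfoldChamber_mem_doubledReps_iff hq hA hB hp hm fun k => abs_nonneg _, hunfold]
    exact hZ

theorem mapsTo_chamberData_shift (hAB : A ≤ B) (hAt : 0 ≤ A + t)
    (hp : p' ≡ p + t * T.offset [ZMOD 2]) :
    Set.MapsTo (fun c => (c.1, c.2.1, c.2.2 + t • T.coweight)) (T.chamberData n p q A B)
      (T.chamberData n p' (q + t * T.coxeter n) (A + t) (B + t)) := by
  rintro ⟨s, σ, m⟩ ⟨hs, hm⟩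
  have hm' := hm.shift hAB hAt hp
  refine ⟨fun k hk => hs k ?_, hm'⟩
  simpa [hm'.coweight_eq_zero hAt (hAt.trans (by omega)) hk] using hk

theorem bijOn_chamberData_shift (hAB : A ≤ B) (hA : 0 ≤ A) (hAt : 0 ≤ A + t)
    (hp : p' ≡ p + t * T.offset [ZMOD 2]) :
    Set.BijOn (fun c => (c.1, c.2.1, c.2.2 + t • T.coweight)) (T.chamberData n p q A B)
      (T.chamberData n p' (q + t * T.coxeter n) (A + t) (B + t)) := by
  refine Set.InvOn.bijOn (f' := fun c => (c.1, c.2.1, c.2.2 + (-t) • T.coweight))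
    ⟨fun c _ => by simp, fun c _ => by simp⟩ (mapsTo_chamberData_shift hAB hAt hp) ?_
  have hp' : p ≡ p' + -t * T.offset [ZMOD 2] := by
    simpa using (hp.add_right (-t * T.offset)).symm
  simpa using mapsTo_chamberData_shift (n := n) (q := q + t * T.coxeter n) (add_le_add_left hAB t)
    (by simpa using hA) hp'

theorem even_coxeter (T : ClassicalType) (n : ℕ) : Even (T.coxeter n) := by
  cases T <;> simp only [coxeter, Nat.even_iff] <;> omega

theorem ncard_doubledReps_shift (hq : Odd q) (hAB : A ≤ B) (hA : 0 ≤ A) (hAt : 0 ≤ A + t)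
    (hpT : T = C ∨ Even p) (hpT' : T = C ∨ Even p') (hp : p' ≡ p + t * T.offset [ZMOD 2]) :
    (T.doubledReps n p' (q + t * T.coxeter n) (A + t) (B + t)).ncard =
      (T.doubledReps n p q A B).ncard := by
  have hq' : Odd (q + t * T.coxeter n) :=
    hq.add_even ((Int.even_coe_nat _).2 (even_coxeter T n) |>.mul_left t)
  rw [← (bijOn_unfoldChamber hq hA (hA.trans hAB) hpT).ncard_eq,
    ← (bijOn_unfoldChamber hq' hAt (hAt.trans (add_le_add_left hAB t)) hpT').ncard_eq,
    (bijOn_chamberData_shift hAB hA hAt hp).ncard_eq]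

end Counting

/-! ### Counting modulo `q` -/

/-- The points modulo `q` at which all positive roots avoid `[u, v]`. -/
def rootComplement (T : ClassicalType) (n q : ℕ) (u v : ℤ) : Set (Fin n → ZMod q) :=
  {x | ∀ r : Fin n → ℤ, T.IsPosRoot r → Avoids (∑ i, r i • x i) u v}

theorem mem_rootComplement_iff {q : ℕ} {u v : ℤ} {x : Fin n → ZMod q} :
    x ∈ T.rootComplement n q u v ↔
      (T = B → ∀ i, Avoids (x i) u v) ∧ (T = C → ∀ i, Avoids (2 * x i) u v) ∧
        ∀ i j, i < j → Avoids (x i - x j) u v ∧ Avoids (x i + x j) u v := by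
  have hsingle (i : Fin n) : ∑ k, (Pi.single i 1 : Fin n → ℤ) k • x k = x i := by
    simp [Pi.single_apply]
  have hlong (i : Fin n) : ∑ k, ((2 : ℤ) • Pi.single i 1 : Fin n → ℤ) k • x k = 2 * x i := by
    simp only [Pi.smul_apply, smul_assoc, ← Finset.smul_sum, hsingle]
    simp
  have hsub (i j : Fin n) :
      ∑ k, (Pi.single i 1 - Pi.single j 1 : Fin n → ℤ) k • x k = x i - x j := by
    simp only [Pi.sub_apply, sub_smul, Finset.sum_sub_distrib, hsingle]
  have hadd (i j : Fin n) :
      ∑ k, (Pi.single i 1 + Pi.single j 1 : Fin n → ℤ) k • x k = x i + x j := by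
    simp only [Pi.add_apply, add_smul, Finset.sum_add_distrib, hsingle]
  refine ⟨fun h => ⟨fun hT i => ?_, fun hT i => ?_, fun i j hij => ⟨?_, ?_⟩⟩, ?_⟩
  · simpa only [hsingle] using h _ (.short i hT)
  · simpa only [hlong] using h _ (.long i hT)
  · simpa only [hsub] using h _ (.sub hij)
  · simpa only [hadd] using h _ (.add hij)
  · rintro ⟨hB, hC, hD⟩ r (hij | hij | ⟨i, hT⟩ | ⟨i, hT⟩)
    · simpa only [hsub] using (hD _ _ hij).1
    · simpa only [hadd] using (hD _ _ hij).2
    · simpa only [hsingle] using hB hT i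
    · simpa only [hlong] using hC hT i

theorem N_B_eq_ncard_rootComplement (n q : ℕ) (u v : ℤ) :
    N_B n q u v = (B.rootComplement n q u v).ncard := by
  rw [N_B]
  congr 1
  ext x
  simp [mem_rootComplement_iff]

theorem N_C_eq_ncard_rootComplement (n q : ℕ) (u v : ℤ) :
    N_C n q u v = (C.rootComplement n q u v).ncard := by
  rw [N_C]
  congr 1
  ext x
  simp [mem_rootComplement_iff]

theorem N_D_eq_ncard_rootComplement (n q : ℕ) (u v : ℤ) :
    N_D n q u v = (D.rootComplement n q u v).ncard := by
  rw [N_D]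
  congr 1
  ext x
  simp [mem_rootComplement_iff]

section Modular

variable {q : ℕ} {p A B : ℤ}

theorem isUnit_two_zmod (hq : Odd q) : IsUnit (2 : ZMod q) := by
  exact_mod_cast (ZMod.isUnit_iff_coprime 2 q).2 hq.coprime_two_left

theorem avoids_iff_clears (hq : Odd q) (hA : 0 ≤ A) (hB : 0 ≤ B) {y : ZMod q} {E : ℤ}
    (hE : (E : ZMod q) = 2 * y) : Avoids y (-A) B ↔ Clears q B E ∧ Clears q A (-E) := by
  have ne_iff (k : ℤ) : y ≠ k ↔ ¬(q : ℤ) ∣ E - 2 * k := by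
    rw [← ZMod.intCast_zmod_eq_zero_iff_dvd]
    push_cast
    rw [hE, ← mul_sub, (isUnit_two_zmod hq).mul_right_eq_zero, sub_eq_zero]
  have ne_neg_iff (k : ℤ) : y ≠ (-k : ℤ) ↔ ¬(q : ℤ) ∣ -E - 2 * k := by
    rw [ne_iff, ← dvd_neg, neg_sub', mul_neg, sub_neg_eq_add, ← sub_eq_add_neg]
  simp only [Avoids, Clears, ← ne_iff, ← ne_neg_iff]
  constructor
  · exact fun h => ⟨fun k hk hkB => h k (by omega) hkB, fun k hk hkA => h _ (by omega) (by omega)⟩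
  · rintro ⟨h, h'⟩ k hkA hkB
    rcases le_total 0 k with hk | hk
    · exact h k hk hkB
    · simpa using h' (-k) (by omega) (by omega)

theorem rootAvoiding_coweight_iff_mem (hq : Odd q) (hA : 0 ≤ A) (hB : 0 ≤ B) {Z : Fin n → ℤ}
    {x : Fin n → ZMod q} (hZ : ∀ i, (Z i : ZMod q) = 2 * x i) :
    T.RootAvoiding q A B T.coweight Z ↔ x ∈ T.rootComplement n q (-A) B := by
  rw [rootAvoiding_iff_forall_isPosRoot]
  refine forall₂_congr fun v hv => ?_
  have hdot : ((v ⬝ᵥ Z : ℤ) : ZMod q) = 2 * ∑ i, v i • x i := by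
    simp [dotProduct, hZ, Finset.mul_sum, mul_left_comm]
  have hpos := hv.dotProduct_coweight_pos
  rw [threshold, if_pos hpos, threshold, if_neg (by rw [neg_dotProduct]; omega),
    avoids_iff_clears hq hA hB hdot]

theorem exists_rep_of_parity (hq : Odd q) {y : ZMod q} (hy : y ≠ 0 ∨ Even p) :
    ∃ z : ℤ, (z : ZMod q) = y ∧ |z| < q ∧ z ≡ p [ZMOD 2] := by
  have : NeZero q := ⟨hq.pos.ne'⟩
  have hval : ((y.val : ℤ) : ZMod q) = y := by simp
  have hlt : (y.val : ℤ) < q := mod_cast y.val_lt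
  have hq_mod := Nat.odd_iff.1 hq
  by_cases hparity : (y.val : ℤ) ≡ p [ZMOD 2]
  · exact ⟨y.val, hval, by rwa [Nat.abs_cast], hparity⟩
  · have hpos : 0 < y.val := by
      refine Nat.pos_of_ne_zero fun hval₀ => hparity ?_
      have hp : Even p := hy.resolve_left (by simpa using hval₀)
      rw [hval₀, Nat.cast_zero]
      exact (Int.even_iff.1 hp).symm
    refine ⟨y.val - q, by simp, by rw [abs_lt]; omega, ?_⟩
    simp only [Int.ModEq] at *
    omega

theorem eq_of_rep_of_parity (hq : Odd q) {z w : ℤ} (hz : |z| < q) (hw : |w| < q)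
    (hparity : z ≡ w [ZMOD 2]) (hzw : (z : ZMod q) = w) : z = w := by
  have hcoprime : IsCoprime (2 : ℤ) q := by exact_mod_cast hq.coprime_two_left
  have hdvd : 2 * (q : ℤ) ∣ w - z :=
    hcoprime.mul_dvd hparity.dvd ((ZMod.intCast_eq_intCast_iff_dvd_sub z w q).1 hzw)
  have hlt : |w - z| < 2 * q := (abs_sub w z).trans_lt (by omega)
  exact (sub_eq_zero.1 (Int.eq_zero_of_abs_lt_dvd hdvd hlt)).symm

theorem bijOn_half (hq : Odd q) (hA : 0 ≤ A) (hB : 0 ≤ B) (hp : T = C ∨ Even p) :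
    Set.BijOn (fun Z i => (2⁻¹ : ZMod q) * (Z i : ZMod q)) (T.doubledReps n p q A B)
      (T.rootComplement n q (-A) B) := by
  have two_mul_half (z : ZMod q) : 2 * (2⁻¹ * z) = z := by
    rw [← mul_assoc, ZMod.mul_inv_of_unit _ (isUnit_two_zmod hq), one_mul]
  refine ⟨fun Z hZ => ?_, fun Z hZ W hW hZW => ?_, fun x hx => ?_⟩
  · exact (rootAvoiding_coweight_iff_mem hq hA hB fun i => (two_mul_half _).symm).1 hZ.2.2
  · ext i
    refine eq_of_rep_of_parity hq (hZ.1 i) (hW.1 i) ((hZ.2.1 i).trans (hW.2.1 i).symm) ?_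
    have hhalf : (2⁻¹ : ZMod q) * Z i = 2⁻¹ * W i := congrFun hZW i
    rw [← two_mul_half (Z i), hhalf, two_mul_half]
  · have hne (i : Fin n) : 2 * x i ≠ 0 ∨ Even p := by
      refine hp.imp_left fun hT => ?_
      simpa using (mem_rootComplement_iff.1 hx).2.1 hT i 0 (by omega) hB
    choose Z hZ hZq hZp using fun i => exists_rep_of_parity hq (hne i)
    refine ⟨Z, ⟨hZq, hZp, (rootAvoiding_coweight_iff_mem hq hA hB hZ).2 hx⟩, ?_⟩
    ext i
    simp only [hZ]
    exact (isUnit_two_zmod hq).mul_left_cancel (two_mul_half _)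

end Modular

theorem ncard_rootComplement_shift (T : ClassicalType) (n : ℕ) {a b q : ℕ} (hab : a ≤ b)
    (hq : Odd q) :
    (T.rootComplement n (q + T.coxeter n * a) (-a) b).ncard =
      (T.rootComplement n q 0 (b - a)).ncard := by
  have hq' : Odd (q + T.coxeter n * a) := hq.add_even ((even_coxeter T n).mul_right a)
  have hp : T = C ∨ Even (a * T.offset) := by cases T <;> simp [offset]
  have hba : (0 : ℤ) ≤ b - a := by omega
  rw [← neg_zero, ← (bijOn_half (p := 0) hq le_rfl hba (.inr Even.zero)).ncard_eq,
    ← (bijOn_half hq' (Nat.cast_nonneg a) (Nat.cast_nonneg b) hp).ncard_eq,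
    ← ncard_doubledReps_shift (t := a) (mod_cast hq) hba le_rfl (by simp) (.inr Even.zero) hp
      (by rw [zero_add])]
  congr 2 <;> push_cast <;> ring

theorem ncard_rootComplement_eq (T : ClassicalType) {n a b q : ℕ} (hab : a ≤ b) (hq : Odd q)
    (hlt : T.coxeter n * a < q) :
    (T.rootComplement n q (-a) b).ncard =
      (T.rootComplement n (q - T.coxeter n * a) 0 (b - a)).ncard := by
  have hq' : Odd (q - T.coxeter n * a) :=
    Nat.Odd.sub_even hlt.le hq ((even_coxeter T n).mul_right a)
  rw [← ncard_rootComplement_shift T n hab hq', Nat.sub_add_cancel hlt.le]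

end ClassicalType

open ClassicalType in
theorem statement15_general (n : ℕ) {a b q : ℕ} (hab : a ≤ b) (hq : Odd q)
    (hlt : 2 * n * a < q) :
    N_B n q (-(a : ℤ)) b = N_B n (q - 2 * n * a) 0 ((b : ℤ) - a) ∧
      N_C n q (-(a : ℤ)) b = N_C n (q - 2 * n * a) 0 ((b : ℤ) - a) ∧
      N_D n q (-(a : ℤ)) b = N_D n (q - (2 * n - 2) * a) 0 ((b : ℤ) - a) := by
  have hlt_D : (2 * n - 2) * a < q :=
    (Nat.mul_le_mul_right a (Nat.sub_le (2 * n) 2)).trans_lt hlt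
  simp only [N_B_eq_ncard_rootComplement, N_C_eq_ncard_rootComplement,
    N_D_eq_ncard_rootComplement]
  exact ⟨ncard_rootComplement_eq B hab hq hlt, ncard_rootComplement_eq C hab hq hlt,
    ncard_rootComplement_eq D hab hq hlt_D⟩

/-- Proposition 5.3 for types `B`, `C`, `D`. For `0 ≤ a ≤ b` and all
large odd `q`, `N_B(n,q,-a,b) = N_B(n,q-2na,0,b-a)`, and similarly for `N_C` and,
with shift `(2n-2)a`, for `N_D`. -/
theorem statement15 (n : ℕ) (hn : 2 ≤ n) (a b : ℕ) (hab : a ≤ b) :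
    ∃ N : ℕ, ∀ q : ℕ, Odd q → N < q →
      N_B n q (-(a : ℤ)) (b : ℤ) = N_B n (q - 2 * n * a) 0 ((b : ℤ) - (a : ℤ)) ∧
      N_C n q (-(a : ℤ)) (b : ℤ) = N_C n (q - 2 * n * a) 0 ((b : ℤ) - (a : ℤ)) ∧
      N_D n q (-(a : ℤ)) (b : ℤ) = N_D n (q - (2 * n - 2) * a) 0 ((b : ℤ) - (a : ℤ)) := by
  exact ⟨2 * n * a, fun _ hq hlt => statement15_general n hab hq hlt⟩
end

section
/- Let n \ge 2 and let a, b be integers with 0 \le a \le b. Set s := (2n+1)a + 1 if both a and b are odd, and s := (2n+1)a otherwise. If P and Q are polynomials in \mathbb{Q}[X] such that P(q) = N_{BC}(n,q,-a,b) for all sufficiently large odd integers q and Q(q) = N_{BC}(n,q,0,b-a) for all sufficiently large odd integers q, then P(X) = Q(X - s) as polynomials. -/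
open Polynomial

/-!
Put `c = b - a` and `m = q - (2 * n + 1) * (a + 1)`. Going round `ZMod q` from `0`, the coordinates
of a tuple and their negatives occur in an order that is encoded by a signed permutation `w`, and
the half circle from `0` to `q / 2` determines the rest. The tuple is counted exactly when
neighbouring letters are at least `b + 1` apart at an ascent of `w` and at least `a + 1` apart
elsewhere, so for large `q` the slack is distributed freely and `w` contributes
`(⌊(m - c * κ w) / 2⌋ + n).choose n`, where `κ w` is the flag ascent number. Hence `N_BC` depends on
`a` only through `m`, which accounts for the shift by `(2 * n + 1) * a`.

If `(2 * n + 1) * a` is even, this shift preserves the parity of `q`. If `a` is odd and `b` is even,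
then `c` is odd, and the count is a polynomial in `m`: splitting each floor by parity leaves an
alternating part `(-1) ^ m * V m`, where `V` is a combination of translates of a polynomial by
multiples of `c`. For `c = 1` every tuple is counted, the total is `q ^ n`, and so `V = 0`; the
polynomials killed by a combination of translates are closed under derivatives, hence under
dilations, so `V = 0` for all odd `c`. If `a` and `b` are both odd, then `c` is even and the count
depends only on `⌊m / 2⌋`, so that the shift can be increased by `1` to make it even.
-/

section DerivativeClosed

variable {K : Type*} [Field K] [CharZero K]

theorem mem_of_degree_le_of_derivative_mem (V : Submodule K K[X])
    (hV : ∀ f ∈ V, derivative f ∈ V) {f g : K[X]} (hg : g ∈ V) (hfg : f.degree ≤ g.degree) :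
    f ∈ V := by
  induction hd : g.natDegree generalizing f g with
  | zero =>
    rcases eq_or_ne g 0 with rfl | hg0
    · have hf : f = 0 := by simpa using hfg
      exact hf ▸ hg
    · rw [eq_C_of_natDegree_eq_zero hd] at hg hg0
      have hf : f = C (f.coeff 0) :=
        eq_C_of_natDegree_eq_zero (by have := natDegree_le_natDegree hfg; omega)
      rw [C_ne_zero] at hg0
      rw [hf, ← div_mul_cancel₀ (f.coeff 0) hg0, C_mul, ← smul_eq_C_mul]
      exact V.smul_mem _ hg
  | succ d ih =>
    set r := f.coeff (d + 1) / g.coeff (d + 1) with hr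
    have hg0 : g.coeff (d + 1) ≠ 0 := by
      rw [← hd, coeff_natDegree, leadingCoeff_ne_zero]
      rintro rfl
      simp at hd
    have hg' : (derivative g).natDegree = d := by rw [natDegree_derivative, hd]; rfl
    have hdeg : (derivative g).degree = d :=
      (degree_eq_iff_natDegree_eq (by
        rw [Ne, derivative_eq_zero]
        omega)).2 hg'
    have hlow : (f - r • g).degree ≤ (derivative g).degree := by
      rw [hdeg, degree_le_iff_coeff_zero]
      intro m hm
      rw [Nat.cast_lt] at hm
      rw [coeff_sub, coeff_smul, smul_eq_mul]
      rcases (Nat.succ_le_of_lt hm).eq_or_lt with rfl | hm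
      · rw [hr, Nat.succ_eq_add_one, div_mul_cancel₀ _ hg0, sub_self]
      · have hgm : g.natDegree < m := by omega
        rw [coeff_eq_zero_of_natDegree_lt hgm,
          coeff_eq_zero_of_natDegree_lt ((natDegree_le_natDegree hfg).trans_lt hgm)]
        simp
    rw [← sub_add_cancel f (r • g)]
    exact V.add_mem (ih (hV g hg) hlow hg') (V.smul_mem r hg)

end DerivativeClosed

section TranslateSum

variable {ι : Type*} [Fintype ι] {R : Type*} [CommSemiring R] {K : Type*} [Field K] [CharZero K]

/-- The operator sending `f` to the combination of its translates `f (X + x i)` with coefficients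
`s i`. -/
noncomputable def translateSum (s x : ι → R) : R[X] →ₗ[R] R[X] :=
  ∑ i, s i • taylor (x i)

theorem eval_translateSum (s x : ι → R) (f : R[X]) (z : R) :
    (translateSum s x f).eval z = ∑ i, s i * f.eval (z + x i) := by
  simp [translateSum, eval_finsetSum, taylor_eval]

theorem translateSum_derivative (s x : ι → R) (f : R[X]) :
    translateSum s x (derivative f) = derivative (translateSum s x f) := by
  simp [translateSum, taylor_apply, derivative_comp]

-- The kernel of `translateSum s x` is closed under derivatives, so it contains `g (c * X + z)`.
theorem translateSum_smul_eq_zero {s x : ι → K} {g : K[X]} (hg : translateSum s x g = 0) (c : K) :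
    translateSum s (c • x) g = 0 := by
  refine Polynomial.funext fun z => ?_
  have hdeg : (g.comp (C c * X + C z)).degree ≤ g.degree := by
    rcases eq_or_ne g 0 with rfl | hg0
    · simp
    · rw [degree_eq_natDegree hg0, ← natDegree_le_iff_degree_le]
      calc (g.comp (C c * X + C z)).natDegree ≤ g.natDegree * 1 :=
            natDegree_comp_le.trans (Nat.mul_le_mul_left _ natDegree_linear_le)
        _ = g.natDegree := mul_one _
  have hmem := mem_of_degree_le_of_derivative_mem (translateSum s x).ker
    (fun f hf => by
      rw [LinearMap.mem_ker] at hf ⊢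
      rw [translateSum_derivative, hf, derivative_zero]) (LinearMap.mem_ker.2 hg) hdeg
  simpa [eval_translateSum, add_comm] using congrArg (eval 0) (LinearMap.mem_ker.1 hmem)

end TranslateSum

section Slack

theorem natCard_sum_le (n m : ℕ) :
    Nat.card {s : Fin n → ℕ // ∑ j, s j ≤ m} = (m + n).choose n := by
  let e : {s : Fin n → ℕ // ∑ j, s j ≤ m} ≃ {s : Fin (n + 1) → ℕ // ∑ j, s j = m} :=
    { toFun s := ⟨Fin.cons (m - ∑ j, s.1 j) s.1, by
        rw [Fin.sum_cons, Nat.sub_add_cancel s.2]⟩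
      invFun s := ⟨Fin.tail s.1,
        (Nat.le_add_left _ _).trans_eq ((Fin.sum_univ_succ s.1).symm.trans s.2)⟩
      left_inv s := by simp
      right_inv s := by
        have hs : m - ∑ j, Fin.tail s.1 j = s.1 0 :=
          Nat.sub_eq_of_eq_add (s.2.symm.trans (Fin.sum_univ_succ s.1))
        simp [hs] }
  rw [Nat.card_congr (e.trans (Sym.equivNatSumOfFintype (Fin (n + 1)) m).symm),
    Sym.natCard_sym_eq_multichoose, Nat.card_fin, Nat.multichoose_eq,
    Nat.add_right_comm, Nat.add_sub_cancel, add_comm n m, Nat.choose_symm_add]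

theorem sum_succ_sub_castSucc {n : ℕ} (p : Fin (n + 1) → ℤ) :
    ∑ j : Fin n, (p j.succ - p j.castSucc) = p (Fin.last n) - p 0 := by
  rw [Finset.sum_sub_distrib]
  linarith [Fin.sum_univ_succ p, Fin.sum_univ_castSucc p]

theorem partialSum_succ_sub_castSucc {n : ℕ} (p : Fin (n + 1) → ℤ) (hp : p 0 = 0) :
    Fin.partialSum (fun j : Fin n => p j.succ - p j.castSucc) = p := by
  funext i
  induction i using Fin.induction with
  | zero => rw [Fin.partialSum_zero, hp]
  | succ j ih => rw [Fin.partialSum_succ, ih, add_sub_cancel]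

theorem natCard_gap_le {n : ℕ} (d : Fin n → ℤ) (m : ℕ) :
    Nat.card {p : Fin (n + 1) → ℤ // p 0 = 0 ∧
      (∀ j : Fin n, p j.castSucc + d j ≤ p j.succ) ∧ p (Fin.last n) ≤ ∑ j, d j + m} =
      (m + n).choose n := by
  rw [← natCard_sum_le]
  refine Nat.card_congr
    { toFun p := ⟨fun j => (p.1 j.succ - p.1 j.castSucc - d j).toNat, ?_⟩
      invFun s := ⟨Fin.partialSum fun j => d j + s.1 j, Fin.partialSum_zero _, fun j => ?_, ?_⟩
      left_inv p := Subtype.ext ?_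
      right_inv s := Subtype.ext (funext fun j => ?_) }
  · obtain ⟨p, h0, hstep, hlast⟩ := p
    zify
    simp only [Int.toNat_of_nonneg (sub_nonneg.2 (le_sub_iff_add_le'.2 (hstep _)))]
    rw [Finset.sum_sub_distrib, sum_succ_sub_castSucc, h0]
    linarith
  · rw [Fin.partialSum_succ]
    lia
  · have hsum := sum_succ_sub_castSucc (Fin.partialSum fun j => d j + s.1 j)
    simp only [Fin.partialSum_succ, add_sub_cancel_left, Fin.partialSum_zero, sub_zero,
      Finset.sum_add_distrib] at hsum
    rw [← hsum]
    exact add_le_add_right (mod_cast s.2) _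
  · obtain ⟨p, h0, hstep, hlast⟩ := p
    simp only [Int.toNat_of_nonneg (sub_nonneg.2 (le_sub_iff_add_le'.2 (hstep _))), add_sub_cancel]
    exact partialSum_succ_sub_castSucc p h0
  · simp [Fin.partialSum_succ]

end Slack

theorem eq_of_frequently_eval_natCast_eq {R : Type*} [CommRing R] [IsDomain R] [CharZero R]
    {f g : R[X]} (h : ∃ᶠ k : ℕ in Filter.atTop, f.eval (k : R) = g.eval (k : R)) : f = g := by
  have hinf := (Nat.frequently_atTop_iff_infinite.1 h).image (Nat.cast_injective (R := R)).injOn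
  refine eq_of_infinite_eval_eq f g (hinf.mono ?_)
  rintro _ ⟨k, hk, rfl⟩
  exact hk

section HalfFloorSum

variable {ι : Type*} [Fintype ι] {κ : ι → ℤ} {H : ℚ[X]} {c : ℤ}

/-- The sum of the values of `H` at the points `⌊(m - c * κ i) / 2⌋`. -/
noncomputable def halfFloorSum (H : ℚ[X]) (κ : ι → ℤ) (c m : ℤ) : ℚ :=
  ∑ i, H.eval (((m - c * κ i) / 2 : ℤ) : ℚ)

theorem halfFloorSum_add_one (hc : Even c) {m : ℤ} (hm : Even m) :
    halfFloorSum H κ c (m + 1) = halfFloorSum H κ c m := by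
  obtain ⟨d, rfl⟩ := hc
  refine Finset.sum_congr rfl fun i _ => ?_
  rw [show (m + 1 - (d + d) * κ i) / 2 = (m - (d + d) * κ i) / 2 by
    obtain ⟨k, rfl⟩ := hm
    rw [add_mul]
    omega]

theorem eval_ediv_two (H : ℚ[X]) (k : ℤ) :
    H.eval ((k / 2 : ℤ) : ℚ) = ((H + H.comp (X - C (1 / 2))).eval ((k : ℚ) / 2) +
      (-1) ^ k * (H - H.comp (X - C (1 / 2))).eval ((k : ℚ) / 2)) / 2 := by
  simp only [eval_add, eval_sub, eval_comp, eval_X, eval_C]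
  rcases Int.even_or_odd' k with ⟨j, rfl | rfl⟩
  · rw [(even_two_mul j).neg_one_zpow, Int.mul_ediv_cancel_left j two_ne_zero,
      show ((2 * j : ℤ) : ℚ) / 2 = j by push_cast; ring]
    ring
  · rw [(odd_two_mul_add_one j).neg_one_zpow, show (2 * j + 1) / 2 = j by omega,
      show ((2 * j + 1 : ℤ) : ℚ) / 2 - 1 / 2 = j by push_cast; ring]
    ring

theorem halfFloorSum_of_odd (hc : Odd c) (m : ℤ) :
    halfFloorSum H κ c m =
      ((translateSum 1 ((c : ℚ) • fun i => -(κ i : ℚ) / 2)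
          (H + H.comp (X - C (1 / 2)))).eval ((m : ℚ) / 2) +
        (-1) ^ m * (translateSum (fun i => (-1) ^ κ i) ((c : ℚ) • fun i => -(κ i : ℚ) / 2)
          (H - H.comp (X - C (1 / 2)))).eval ((m : ℚ) / 2)) / 2 := by
  have hsign (i : ι) : (-1 : ℚ) ^ (m - c * κ i) = (-1) ^ m * (-1) ^ κ i := by
    rw [zpow_sub₀ (by norm_num), zpow_mul, hc.neg_one_zpow, div_eq_mul_inv, ← inv_zpow, inv_neg_one]
  have hpoint (i : ι) : ((m - c * κ i : ℤ) : ℚ) / 2 = (m : ℚ) / 2 + (c : ℚ) * (-(κ i : ℚ) / 2) := by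
    push_cast
    ring
  simp only [halfFloorSum, eval_ediv_two H, hsign, hpoint, eval_translateSum, Pi.smul_apply,
    smul_eq_mul, Pi.one_apply, one_mul, ← Finset.sum_div, Finset.sum_add_distrib, Finset.mul_sum,
    mul_assoc]

theorem translateSum_eq_zero_of_halfFloorSum_eq_eval {R : ℚ[X]}
    (hR : ∀ᶠ k : ℕ in Filter.atTop, R.eval (k : ℚ) = halfFloorSum H κ 1 k) :
    translateSum (fun i => (-1) ^ κ i) (fun i => -(κ i : ℚ) / 2) (H - H.comp (X - C (1 / 2))) =
      0 := by
  set U := translateSum 1 (fun i => -(κ i : ℚ) / 2) (H + H.comp (X - C (1 / 2)))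
  set V := translateSum (fun i => (-1) ^ κ i) (fun i => -(κ i : ℚ) / 2)
    (H - H.comp (X - C (1 / 2)))
  have hUV (k : ℕ) : halfFloorSum H κ 1 k =
      (U.eval ((k : ℚ) / 2) + (-1) ^ k * V.eval ((k : ℚ) / 2)) / 2 := by
    simpa [U, V] using halfFloorSum_of_odd (H := H) (κ := κ) odd_one k
  set D := C 2 * R - U.comp (C (1 / 2) * X)
  set V' := V.comp (C (1 / 2) * X)
  have hDV : ∀ᶠ k : ℕ in Filter.atTop, D.eval (k : ℚ) = (-1) ^ k * V'.eval (k : ℚ) := by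
    filter_upwards [hR] with k hk
    simp only [D, V', eval_sub, eval_mul, eval_C, eval_comp, eval_X, hk, hUV]
    ring_nf
  have heven : D = V' := eq_of_frequently_eval_natCast_eq <|
    (Nat.frequently_even.and_eventually hDV).mono fun k ⟨hk, hkD⟩ => by
      rw [hkD, hk.neg_one_pow, one_mul]
  have hodd : D = -V' := eq_of_frequently_eval_natCast_eq <|
    (Nat.frequently_odd.and_eventually hDV).mono fun k ⟨hk, hkD⟩ => by
      rw [hkD, hk.neg_one_pow, neg_one_mul, eval_neg]
  have hV' : V' = 0 := self_eq_neg.1 (heven.symm.trans hodd)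
  refine Polynomial.funext fun z => ?_
  simpa [V'] using congrArg (eval (2 * z)) hV'

theorem exists_eval_eq_halfFloorSum_of_odd {R : ℚ[X]}
    (hR : ∀ᶠ k : ℕ in Filter.atTop, R.eval (k : ℚ) = halfFloorSum H κ 1 k) (hc : Odd c) :
    ∃ S : ℚ[X], ∀ m : ℤ, S.eval (m : ℚ) = halfFloorSum H κ c m := by
  refine ⟨C (1 / 2) * (translateSum 1 ((c : ℚ) • fun i => -(κ i : ℚ) / 2)
    (H + H.comp (X - C (1 / 2)))).comp (C (1 / 2) * X), fun m => ?_⟩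
  rw [halfFloorSum_of_odd hc, translateSum_smul_eq_zero
    (translateSum_eq_zero_of_halfFloorSum_eq_eval hR)]
  simp only [eval_mul, eval_C, eval_comp, eval_X, eval_zero]
  ring_nf

end HalfFloorSum

/-- A letter of the type `B` alphabet: `signed i true` stands for `i`, `signed i false` for `-i`. -/
inductive Letter (n : ℕ)
  | zero
  | signed (i : Fin n) (positive : Bool)

namespace Letter

variable {n : ℕ}

instance : Neg (Letter n) where
  neg
    | zero => zero
    | signed i b => signed i !b

@[simp] theorem neg_zero : -(zero : Letter n) = zero := rfl

@[simp] theorem neg_signed (i : Fin n) (b : Bool) : -signed i b = signed i !b := rfl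

instance : InvolutiveNeg (Letter n) where
  neg_neg e := by cases e <;> simp

/-- The integer by which letters are ordered. Since `x i - x j` is only constrained for `i < j`, the
letters have to be ordered as `-0 < -1 < ⋯ < zero < ⋯ < 1 < 0`. -/
def label : Letter n → ℤ
  | zero => 0
  | signed i true => n - i
  | signed i false => i - n

@[simp] theorem label_zero : (zero : Letter n).label = 0 := rfl

@[simp] theorem label_neg (e : Letter n) : (-e).label = -e.label := by
  rcases e with _ | ⟨i, _ | _⟩ <;> simp [label]

theorem label_injective : Function.Injective (label (n := n)) := by
  rintro (_ | ⟨i, _ | _⟩) (_ | ⟨j, _ | _⟩) h <;> grind [label]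

theorem label_pos_iff {i : Fin n} {b : Bool} : 0 < (signed i b).label ↔ b = true := by
  cases b <;> simp [label]

theorem label_neg_iff {i : Fin n} {b : Bool} : (signed i b).label < 0 ↔ b = false := by
  cases b <;> simp [label]

/-- The value of a letter when the letter `i` has value `x i`. -/
def eval {A : Type*} [AddGroup A] (x : Fin n → A) : Letter n → A
  | zero => 0
  | signed i true => x i
  | signed i false => -x i

@[simp] theorem eval_neg {A : Type*} [AddGroup A] (x : Fin n → A) (e : Letter n) :
    (-e).eval x = -e.eval x := by
  rcases e with _ | ⟨i, _ | _⟩ <;> simp [eval]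

end Letter

/-- The tuples counted by `N_BC`. -/
def admissibleTuples (n q : ℕ) (u v : ℤ) : Set (Fin n → ZMod q) :=
  {x | (∀ i, Avoids (x i) u v ∧ Avoids (2 * x i) u v) ∧
    ∀ i j : Fin n, i < j → Avoids (x i - x j) u v ∧ Avoids (x i + x j) u v}

theorem mem_admissibleTuples_iff {n q : ℕ} {u v : ℤ} {x : Fin n → ZMod q} :
    x ∈ admissibleTuples n q u v ↔
      ∀ e f : Letter n, f.label < e.label → Avoids (e.eval x - f.eval x) u v := by
  constructor
  · rintro ⟨hone, htwo⟩ (_ | ⟨i, _ | _⟩) (_ | ⟨j, _ | _⟩) h <;>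
      simp only [Letter.label, Letter.eval] at h ⊢
    · omega
    · simpa using (hone j).1
    · omega
    · omega
    · rw [neg_sub_neg]
      exact (htwo j i (by omega)).1
    · omega
    · simpa using (hone i).1
    · rw [sub_neg_eq_add]
      rcases lt_trichotomy i j with hij | rfl | hij
      · exact (htwo i j hij).2
      · exact two_mul (x i) ▸ (hone i).2
      · exact add_comm (x j) (x i) ▸ (htwo j i hij).2
    · exact (htwo i j (by omega)).1
  · intro h
    refine ⟨fun i => ⟨?_, ?_⟩, fun i j hij => ⟨?_, ?_⟩⟩
    · simpa [Letter.eval] using h (.signed i true) .zero (Letter.label_pos_iff.2 rfl)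
    · simpa [Letter.eval, two_mul] using h (.signed i true) (.signed i false)
        ((Letter.label_neg_iff.2 rfl).trans (Letter.label_pos_iff.2 rfl))
    · exact h (.signed i true) (.signed j true) (by simp only [Letter.label]; omega)
    · simpa [Letter.eval] using h (.signed i true) (.signed j false)
        ((Letter.label_neg_iff.2 rfl).trans (Letter.label_pos_iff.2 rfl))

section Clears

variable {n q : ℕ} {α β : ℤ}

/-- The least distance allowed from a letter `e` to a letter `f` lying to the right of it. -/
def minGap (α β : ℤ) (e f : Letter n) : ℤ :=
  if e.label < f.label then β else α

/-- `Clears α β y z` says that the letter `z.2` at position `z.1` lies at least the minimal gap to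
the right of the letter `y.2` at position `y.1`. -/
def Clears (α β : ℤ) (y z : ℤ × Letter n) : Prop :=
  y.1 + minGap α β y.2 z.2 ≤ z.1

namespace Clears

theorem trans (hα : 0 ≤ α) (hαβ : α ≤ β) {x y z : ℤ × Letter n} (hxy : Clears α β x y)
    (hyz : Clears α β y z) : Clears α β x z := by
  unfold Clears minGap at *
  grind

theorem neg {y z : ℤ × Letter n} (h : Clears α β y z) : Clears α β (-z) (-y) := by
  simp only [Clears, minGap, Prod.fst_neg, Prod.snd_neg, Letter.label_neg, neg_lt_neg_iff] at *
  linarith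

theorem shift {y z : ℤ} {e f : Letter n} (h : Clears α β (y, e) (z, f)) (t : ℤ) :
    Clears α β (t + y, e) (t + z, f) := by
  simp only [Clears] at *
  linarith

theorem mono {α' β' : ℤ} (hα : α' ≤ α) (hβ : β' ≤ β) {y z : ℤ × Letter n} (h : Clears α β y z) :
    Clears α' β' y z := by
  unfold Clears minGap at *
  grind

end Clears

theorem clears_zero_one_iff {y z : ℤ × Letter n} :
    Clears 0 1 y z ↔ toLex (y.1, -y.2.label) ≤ toLex (z.1, -z.2.label) := by
  simp only [Clears, minGap, Prod.Lex.toLex_le_toLex]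
  grind

/-- Two letters are separated when, on the circle of length `q` where they sit at their values under
`x`, each clears the other in the positive direction. -/
def AreSeparated (α β : ℤ) (x : Fin n → ZMod q) (e f : Letter n) : Prop :=
  ∃ y z : ℤ, (y : ZMod q) = e.eval x ∧ (z : ZMod q) = f.eval x ∧
    Clears α β (y, e) (z, f) ∧ Clears α β (z, f) (q + y, e)

namespace AreSeparated

variable {x : Fin n → ZMod q} {e f : Letter n}

theorem symm (h : AreSeparated α β x e f) : AreSeparated α β x f e := by
  obtain ⟨y, z, hy, hz, hyz, hzy⟩ := h
  exact ⟨z, q + y, hz, by simpa using hy, hzy, hyz.shift q⟩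

theorem neg (h : AreSeparated α β x e f) : AreSeparated α β x (-e) (-f) := by
  obtain ⟨y, z, hy, hz, hyz, hzy⟩ := h
  refine AreSeparated.symm ⟨-z, -y, by simp [hz], by simp [hy], hyz.neg, ?_⟩
  simpa using hzy.neg.shift q

theorem avoids_sub (h : AreSeparated α β x e f) (hfe : f.label < e.label) :
    Avoids (e.eval x - f.eval x) (1 - α) (β - 1) := by
  obtain ⟨y, z, hy, hz, hyz, hzy⟩ := h
  simp only [Clears, minGap, hfe, hfe.not_gt, if_true, if_false] at hyz hzy
  intro k hlow hhigh hk
  have hdvd : (q : ℤ) ∣ k - (y - z) := by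
    rw [← ZMod.intCast_eq_intCast_iff_dvd_sub, ← hk, Int.cast_sub, hy, hz]
  exact absurd (Int.le_of_dvd (by linarith) hdvd) (by linarith)

end AreSeparated

theorem clears_of_mem_admissibleTuples (hα : 1 ≤ α) (hβ : 1 ≤ β) {x : Fin n → ZMod q}
    (hx : x ∈ admissibleTuples n q (1 - α) (β - 1)) {e f : Letter n} (hef : e ≠ f) {y z : ℤ}
    (hy : (y : ZMod q) = e.eval x) (hz : (z : ZMod q) = f.eval x) (hyz : y ≤ z) :
    Clears α β (y, e) (z, f) := by
  rw [mem_admissibleTuples_iff] at hx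
  simp only [Clears, minGap]
  by_contra! hlt
  rcases lt_or_gt_of_ne (Letter.label_injective.ne hef) with h | h
  · rw [if_pos h] at hlt
    exact hx f e h (z - y) (by linarith) (by linarith) (by simp [hy, hz])
  · rw [if_neg h.not_gt] at hlt
    exact hx e f h (y - z) (by linarith) (by linarith) (by simp [hy, hz])

end Clears

/-- A signed permutation `w` of `Fin n`: the letter at place `j` is `w.1 j`, and the letter `i` is
taken with the sign `w.2 i`. -/
abbrev SignedPerm (n : ℕ) := Equiv.Perm (Fin n) × (Fin n → Bool)

namespace SignedPerm

variable {n : ℕ}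

/-- The letters of a signed permutation, preceded by `Letter.zero`. -/
def word (w : SignedPerm n) : Fin (n + 1) → Letter n :=
  Fin.cons .zero fun j => .signed (w.1 j) (w.2 (w.1 j))

@[simp] theorem word_zero (w : SignedPerm n) : w.word 0 = .zero := rfl

@[simp] theorem word_succ (w : SignedPerm n) (j : Fin n) :
    w.word j.succ = .signed (w.1 j) (w.2 (w.1 j)) := rfl

theorem exists_eq_word_or_eq_neg_word (w : SignedPerm n) (e : Letter n) :
    ∃ j, e = w.word j ∨ e = -w.word j := by
  rcases e with _ | ⟨i, b⟩
  · exact ⟨0, .inl rfl⟩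
  · refine ⟨(w.1.symm i).succ, ?_⟩
    cases b <;> cases h : w.2 i <;> simp [h]

theorem word_castSucc_ne_word_succ (w : SignedPerm n) (j : Fin n) :
    w.word j.castSucc ≠ w.word j.succ := by
  rcases Fin.eq_zero_or_eq_succ j.castSucc with h | ⟨k, hk⟩
  · simp [h]
  · have hkj : k ≠ j := by
      rintro rfl
      exact (Fin.castSucc_lt_succ (i := k)).ne hk
    simp [hk, hkj]

theorem word_ne_neg_word (w : SignedPerm n) {j : Fin (n + 1)} (hj : j ≠ 0) :
    w.word j ≠ -w.word j := by
  obtain ⟨k, rfl⟩ := Fin.exists_succ_eq.2 hj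
  simp

/-- The tuple in which the letter at place `j` of the word of `w` has the value `p j`. -/
def tuple {A : Type*} [Neg A] (w : SignedPerm n) (p : Fin (n + 1) → A) (i : Fin n) : A :=
  if w.2 i then p (w.1.symm i).succ else -p (w.1.symm i).succ

theorem eval_word_tuple {A : Type*} [AddGroup A] (w : SignedPerm n) {p : Fin (n + 1) → A}
    (hp : p 0 = 0) (j : Fin (n + 1)) : (w.word j).eval (w.tuple p) = p j := by
  cases j using Fin.cases with
  | zero => exact hp.symm
  | succ j => cases h : w.2 (w.1 j) <;> simp [h, Letter.eval, tuple]

end SignedPerm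

/-- `p` spreads the letters of `w` over the first half of a circle of length `q`, starting with
`Letter.zero` at `0`, such that consecutive letters, and the last letter and its mirror image in the
second half, respect the minimal gaps. -/
structure IsSpaced (q : ℕ) (α β : ℤ) {n : ℕ} (w : SignedPerm n) (p : Fin (n + 1) → ℤ) : Prop where
  zero : p 0 = 0
  step (j : Fin n) : Clears α β (p j.castSucc, w.word j.castSucc) (p j.succ, w.word j.succ)
  last : Clears α β (p (Fin.last n), w.word (Fin.last n))
    (q - p (Fin.last n), -w.word (Fin.last n))

namespace IsSpaced

variable {n q : ℕ} {α β : ℤ} {w : SignedPerm n} {p : Fin (n + 1) → ℤ}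

theorem mono {α' β' : ℤ} (h : IsSpaced q α β w p) (hα : α' ≤ α) (hβ : β' ≤ β) :
    IsSpaced q α' β' w p :=
  ⟨h.zero, fun j => (h.step j).mono hα hβ, h.last.mono hα hβ⟩

theorem clears_of_lt (hα : 0 ≤ α) (hαβ : α ≤ β) (h : IsSpaced q α β w p) {i j : Fin (n + 1)}
    (hij : i < j) : Clears α β (p i, w.word i) (p j, w.word j) :=
  haveI : IsTrans (ℤ × Letter n) (Clears α β) := ⟨fun _ _ _ => Clears.trans hα hαβ⟩
  (Fin.liftFun_iff_succ (f := fun j => (p j, w.word j)) (Clears α β)).2 h.step hij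

theorem clears_mirror (hα : 0 ≤ α) (hαβ : α ≤ β) (h : IsSpaced q α β w p) (i j : Fin (n + 1)) :
    Clears α β (p i, w.word i) (q - p j, -w.word j) := by
  have hleft (i : Fin (n + 1)) :
      Clears α β (p i, w.word i) (q - p (Fin.last n), -w.word (Fin.last n)) := by
    rcases (Fin.le_last i).eq_or_lt with rfl | hi
    · exact h.last
    · exact (h.clears_of_lt hα hαβ hi).trans hα hαβ h.last
  rcases (Fin.le_last j).eq_or_lt with rfl | hj
  · exact hleft i
  · exact (hleft i).trans hα hαβ (by simpa [← sub_eq_add_neg] using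
      (h.clears_of_lt hα hαβ hj).neg.shift q)

theorem clears_of_mirror (hα : 0 ≤ α) (hαβ : α ≤ β) (h : IsSpaced q α β w p) {i j : Fin (n + 1)}
    (hij : i ≠ 0 ∨ j ≠ 0) : Clears α β (-p j, -w.word j) (p i, w.word i) := by
  have hright (i : Fin (n + 1)) (hi : i ≠ 0) : Clears α β (0, .zero) (p i, w.word i) := by
    simpa [h.zero] using h.clears_of_lt hα hαβ (Fin.pos_of_ne_zero hi)
  have hleft (j : Fin (n + 1)) (hj : j ≠ 0) : Clears α β (-p j, -w.word j) (0, .zero) := by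
    simpa using (hright j hj).neg
  rcases eq_or_ne i 0 with rfl | hi
  · simpa [h.zero] using hleft j (by simpa using hij)
  · rcases eq_or_ne j 0 with rfl | hj
    · simpa [h.zero] using hright i hi
    · exact (hleft j hj).trans hα hαβ (hright i hi)

theorem intCast_eq_eval_word (h : IsSpaced q α β w p) (j : Fin (n + 1)) :
    (p j : ZMod q) = (w.word j).eval (w.tuple fun j => (p j : ZMod q)) :=
  (w.eval_word_tuple (p := fun j => (p j : ZMod q)) (by simp [h.zero]) j).symm

theorem areSeparated_word (hα : 0 ≤ α) (hαβ : α ≤ β) (h : IsSpaced q α β w p)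
    {i j : Fin (n + 1)} (hij : i ≠ j) :
    AreSeparated α β (w.tuple fun j => (p j : ZMod q)) (w.word i) (w.word j) := by
  wlog hlt : i < j generalizing i j
  · exact (this hij.symm (hij.lt_or_gt.resolve_left hlt)).symm
  refine ⟨p i, p j, h.intCast_eq_eval_word i, h.intCast_eq_eval_word j,
    h.clears_of_lt hα hαβ hlt, ?_⟩
  have hturn : Clears α β (p j, w.word j) (q + 0, .zero) := by
    simpa [h.zero] using h.clears_mirror hα hαβ j 0
  rcases eq_or_ne i 0 with rfl | hi
  · simpa [h.zero] using hturn
  · have hstart := h.clears_of_lt hα hαβ (Fin.pos_of_ne_zero hi)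
    rw [h.zero, w.word_zero] at hstart
    exact hturn.trans hα hαβ (hstart.shift q)

theorem areSeparated_neg_word (hα : 0 ≤ α) (hαβ : α ≤ β) (h : IsSpaced q α β w p)
    {i j : Fin (n + 1)} (hij : i ≠ 0 ∨ j ≠ 0) :
    AreSeparated α β (w.tuple fun j => (p j : ZMod q)) (w.word i) (-w.word j) :=
  ⟨p i, q - p j, h.intCast_eq_eval_word i, by simp [h.intCast_eq_eval_word j],
    h.clears_mirror hα hαβ i j, by
      simpa [← sub_eq_add_neg] using (h.clears_of_mirror hα hαβ hij).shift q⟩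

theorem areSeparated (hα : 0 ≤ α) (hαβ : α ≤ β) (h : IsSpaced q α β w p) {e f : Letter n}
    (hef : e ≠ f) : AreSeparated α β (w.tuple fun j => (p j : ZMod q)) e f := by
  have hor {i j : Fin (n + 1)} (hne : w.word i ≠ -w.word j) : i ≠ 0 ∨ j ≠ 0 := by
    by_contra! hij
    exact hne (by simp [hij.1, hij.2])
  obtain ⟨i, rfl | rfl⟩ := w.exists_eq_word_or_eq_neg_word e <;>
    obtain ⟨j, rfl | rfl⟩ := w.exists_eq_word_or_eq_neg_word f
  · exact h.areSeparated_word hα hαβ (ne_of_apply_ne _ hef)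
  · exact h.areSeparated_neg_word hα hαβ (hor hef)
  · exact (h.areSeparated_neg_word hα hαβ (hor hef.symm)).symm
  · exact (h.areSeparated_word hα hαβ (ne_of_apply_ne (-w.word ·) hef)).neg

theorem tuple_mem_admissibleTuples (hα : 0 ≤ α) (hαβ : α ≤ β) (h : IsSpaced q α β w p) :
    (w.tuple fun j => (p j : ZMod q)) ∈ admissibleTuples n q (1 - α) (β - 1) :=
  mem_admissibleTuples_iff.2 fun _ _ hfe =>
    (h.areSeparated hα hαβ (ne_of_apply_ne _ hfe.ne')).avoids_sub hfe

theorem of_mem_admissibleTuples (hn : 0 < n) (hα : 1 ≤ α) (hβ : 1 ≤ β) (h : IsSpaced q 0 1 w p)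
    (hx : (w.tuple fun j => (p j : ZMod q)) ∈ admissibleTuples n q (1 - α) (β - 1)) :
    IsSpaced q α β w p := by
  have hle {y z : ℤ × Letter n} (hyz : Clears 0 1 y z) : y.1 ≤ z.1 := by
    unfold Clears minGap at hyz
    grind
  refine ⟨h.zero, fun j => ?_, ?_⟩
  · exact clears_of_mem_admissibleTuples hα hβ hx (w.word_castSucc_ne_word_succ j)
      (h.intCast_eq_eval_word _) (h.intCast_eq_eval_word _) (hle (h.step j))
  · exact clears_of_mem_admissibleTuples hα hβ hx (w.word_ne_neg_word (by simp [hn.ne']))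
      (h.intCast_eq_eval_word _) (by simp [h.intCast_eq_eval_word (Fin.last n)]) (hle h.last)

end IsSpaced

section Sorting

variable {n q : ℕ}

/-- The sign with which `i` occurs in the sorted word of `x`. -/
def signOf (x : Fin n → ZMod q) (i : Fin n) : Bool :=
  decide (0 < (x i).valMinAbs)

/-- Sorting `Fin n` by this key yields the word that is spaced for `α = 0` and `β = 1`: coordinates
are ordered by absolute value, and those of equal absolute value by decreasing label. -/
def sortKey (x : Fin n → ZMod q) (i : Fin n) : ℤ ×ₗ ℤ :=
  toLex (|(x i).valMinAbs|, -(Letter.signed i (signOf x i)).label)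

theorem sortKey_injective (x : Fin n → ZMod q) : Function.Injective (sortKey x) := by
  intro i j h
  have hlabel := neg_injective (congrArg (fun k => (ofLex k).2) h)
  exact (Letter.signed.inj (Letter.label_injective hlabel)).1

namespace IsSpaced

variable {w : SignedPerm n} {p : Fin (n + 1) → ℤ}

theorem bounds (h : IsSpaced q 0 1 w p) (j : Fin n) :
    if w.2 (w.1 j) then 0 < p j.succ ∧ 2 * p j.succ ≤ q
    else 0 ≤ p j.succ ∧ 2 * p j.succ < q := by
  have hstart := h.clears_of_lt le_rfl zero_le_one j.succ_pos
  have hmirror := h.clears_mirror le_rfl zero_le_one j.succ j.succ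
  simp only [Clears, minGap, h.zero, SignedPerm.word_zero, SignedPerm.word_succ, Letter.neg_signed,
    Letter.label] at hstart hmirror
  cases hw : w.2 (w.1 j) <;>
    simp only [hw, Bool.not_true, Bool.not_false] at hstart hmirror ⊢ <;>
    grind

variable [NeZero q]

theorem valMinAbs_tuple (h : IsSpaced q 0 1 w p) (j : Fin n) :
    (w.tuple (fun j => (p j : ZMod q)) (w.1 j)).valMinAbs =
      if w.2 (w.1 j) then p j.succ else -p j.succ := by
  have hbounds := h.bounds j
  rw [ZMod.valMinAbs_spec, SignedPerm.tuple, Equiv.symm_apply_apply, Set.mem_Ioc]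
  split_ifs at hbounds ⊢
  · exact ⟨rfl, by omega⟩
  · exact ⟨by push_cast; rfl, by omega⟩

theorem signOf_tuple (h : IsSpaced q 0 1 w p) : signOf (w.tuple fun j => (p j : ZMod q)) = w.2 := by
  funext i
  obtain ⟨j, rfl⟩ := w.1.surjective i
  have hbounds := h.bounds j
  cases hw : w.2 (w.1 j) <;> simp_all [signOf, h.valMinAbs_tuple]

theorem abs_valMinAbs_tuple (h : IsSpaced q 0 1 w p) (j : Fin n) :
    |(w.tuple (fun j => (p j : ZMod q)) (w.1 j)).valMinAbs| = p j.succ := by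
  have hbounds := h.bounds j
  rw [h.valMinAbs_tuple]
  split_ifs at hbounds ⊢
  · exact abs_of_pos hbounds.1
  · rw [abs_neg, abs_of_nonneg hbounds.1]

theorem sortKey_tuple (h : IsSpaced q 0 1 w p) (j : Fin n) :
    sortKey (w.tuple fun j => (p j : ZMod q)) (w.1 j) =
      toLex (p j.succ, -(w.word j.succ).label) := by
  rw [sortKey, h.signOf_tuple, h.abs_valMinAbs_tuple, w.word_succ]

theorem monotone_sortKey_tuple (h : IsSpaced q 0 1 w p) :
    Monotone (sortKey (w.tuple fun j => (p j : ZMod q)) ∘ w.1) := by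
  intro i j hij
  rcases hij.eq_or_lt with rfl | hij
  · exact le_rfl
  · simp only [Function.comp_apply, h.sortKey_tuple]
    exact clears_zero_one_iff.1 (h.clears_of_lt le_rfl zero_le_one (Fin.succ_lt_succ_iff.2 hij))

theorem eq_of_tuple_eq {w' : SignedPerm n} {p' : Fin (n + 1) → ℤ} (h : IsSpaced q 0 1 w p)
    (h' : IsSpaced q 0 1 w' p')
    (heq : (w.tuple fun j => (p j : ZMod q)) = w'.tuple fun j => (p' j : ZMod q)) :
    w = w' ∧ p = p' := by
  have hperm : w.1 = w'.1 := by
    have hkey := Tuple.unique_monotone h.monotone_sortKey_tuple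
      (heq ▸ h'.monotone_sortKey_tuple)
    exact Equiv.ext fun j => sortKey_injective _ (congrFun hkey j)
  refine ⟨Prod.ext hperm ?_, funext fun j => ?_⟩
  · rw [← h.signOf_tuple, heq, h'.signOf_tuple]
  · cases j using Fin.cases with
    | zero => rw [h.zero, h'.zero]
    | succ j => rw [← h.abs_valMinAbs_tuple, ← h'.abs_valMinAbs_tuple, heq, hperm]

end IsSpaced

/-- The signed permutation whose word lists the coordinates of `x` in the order of `sortKey`. -/
def sortPerm (x : Fin n → ZMod q) : SignedPerm n :=
  (Tuple.sort (sortKey x), signOf x)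

/-- The absolute values of the coordinates of `x` in the order of `sortKey`, preceded by `0`. -/
def sortedAbs (x : Fin n → ZMod q) : Fin (n + 1) → ℤ :=
  Fin.cons 0 fun j => |(x ((sortPerm x).1 j)).valMinAbs|

theorem sortPerm_snd_iff {x : Fin n → ZMod q} {i : Fin n} :
    (sortPerm x).2 i = true ↔ 0 < (x i).valMinAbs :=
  decide_eq_true_iff

theorem sortedAbs_succ (x : Fin n → ZMod q) (j : Fin n) :
    sortedAbs x j.succ = |(x ((sortPerm x).1 j)).valMinAbs| := rfl

theorem tuple_sortedAbs (x : Fin n → ZMod q) :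
    ((sortPerm x).tuple fun j => (sortedAbs x j : ZMod q)) = x := by
  funext i
  obtain ⟨j, rfl⟩ := (sortPerm x).1.surjective i
  have hcast := ZMod.coe_valMinAbs (x ((sortPerm x).1 j))
  simp only [SignedPerm.tuple, Equiv.symm_apply_apply, sortedAbs_succ, sortPerm_snd_iff]
  split_ifs with hpos
  · rw [abs_of_pos hpos, hcast]
  · rw [abs_of_nonpos (not_lt.1 hpos), Int.cast_neg, neg_neg, hcast]

theorem clears_zero_sortedAbs_succ (x : Fin n → ZMod q) (j : Fin n) :
    Clears 0 1 (0, .zero) (sortedAbs x j.succ, (sortPerm x).word j.succ) := by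
  simp only [Clears, minGap, SignedPerm.word_succ, Letter.label_zero, Letter.label_pos_iff,
    sortPerm_snd_iff, sortedAbs_succ]
  grind

theorem clears_sortedAbs_succ_mirror [NeZero q] (x : Fin n → ZMod q) (j : Fin n) :
    Clears 0 1 (sortedAbs x j.succ, (sortPerm x).word j.succ)
      (q - sortedAbs x j.succ, -(sortPerm x).word j.succ) := by
  have hbounds := (x ((sortPerm x).1 j)).valMinAbs_mem_Ioc
  simp only [Clears, minGap, SignedPerm.word_succ, Letter.label_neg, lt_neg_self_iff,
    Letter.label_neg_iff, ← Bool.not_eq_true, sortPerm_snd_iff, sortedAbs_succ]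
  grind

theorem isSpaced_sortedAbs [NeZero q] (x : Fin n → ZMod q) :
    IsSpaced q 0 1 (sortPerm x) (sortedAbs x) := by
  have hkey (j : Fin n) : toLex (sortedAbs x j.succ, -((sortPerm x).word j.succ).label) =
      sortKey x ((sortPerm x).1 j) := rfl
  refine ⟨rfl, fun j => ?_, ?_⟩
  · rcases Fin.eq_zero_or_eq_succ j.castSucc with hj | ⟨k, hk⟩
    · rw [hj]
      exact clears_zero_sortedAbs_succ x j
    · have hkj : k ≤ j := by
        rw [← Fin.succ_le_succ_iff, ← hk]
        exact Fin.castSucc_lt_succ.le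
      rw [hk, clears_zero_one_iff, hkey, hkey]
      exact Tuple.monotone_sort (sortKey x) hkj
  · rcases Fin.eq_zero_or_eq_succ (Fin.last n) with hlast | ⟨k, hk⟩
    · rw [hlast]
      simp [Clears, minGap, sortedAbs]
    · rw [hk]
      exact clears_sortedAbs_succ_mirror x k

theorem ncard_eq_sum_natCard_isSpaced [NeZero q] {α β : ℤ} (S : Set (Fin n → ZMod q))
    (hS : ∀ (w : SignedPerm n) (p : Fin (n + 1) → ℤ), IsSpaced q α β w p ↔
      IsSpaced q 0 1 w p ∧ (w.tuple fun j => (p j : ZMod q)) ∈ S) :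
    S.ncard = ∑ w : SignedPerm n, Nat.card {p : Fin (n + 1) → ℤ // IsSpaced q α β w p} := by
  let f : (Σ w : SignedPerm n, {p : Fin (n + 1) → ℤ // IsSpaced q α β w p}) → S := fun c =>
    ⟨c.1.tuple fun j => (c.2.1 j : ZMod q), ((hS _ _).1 c.2.2).2⟩
  have hf : Function.Bijective f := by
    constructor
    · rintro ⟨w, p, hp⟩ ⟨w', p', hp'⟩ heq
      obtain ⟨rfl, rfl⟩ := IsSpaced.eq_of_tuple_eq ((hS _ _).1 hp).1 ((hS _ _).1 hp').1
        (congrArg Subtype.val heq)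
      rfl
    · rintro ⟨x, hx⟩
      exact ⟨⟨sortPerm x, sortedAbs x, (hS _ _).2
        ⟨isSpaced_sortedAbs x, (tuple_sortedAbs x).symm ▸ hx⟩⟩, Subtype.ext (tuple_sortedAbs x)⟩
  have (w : SignedPerm n) : Finite {p : Fin (n + 1) → ℤ // IsSpaced q α β w p} :=
    Finite.of_injective (f ⟨w, ·⟩) (hf.injective.comp sigma_mk_injective)
  rw [← Nat.card_coe_set_eq, ← Nat.card_congr (Equiv.ofBijective f hf), Nat.card_sigma]

end Sorting

section Counting

variable {n q : ℕ} {α β : ℤ}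

/-- The number of flag ascents of a signed permutation: twice the number of ascents of its word
(including an ascent from `Letter.zero`), plus one if the last letter is negative. -/
def flagAscents (w : SignedPerm n) : ℤ :=
  2 * (Finset.univ.filter fun j : Fin n =>
    (w.word j.castSucc).label < (w.word j.succ).label).card +
    if (w.word (Fin.last n)).label < 0 then 1 else 0

theorem flagAscents_le (w : SignedPerm n) : flagAscents w ≤ 2 * n + 1 := by
  have hcard := (Finset.card_filter_le Finset.univ fun j : Fin n =>
    (w.word j.castSucc).label < (w.word j.succ).label).trans_eq (Finset.card_fin n)
  unfold flagAscents
  split_ifs <;> omega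

theorem two_mul_sum_minGap_add_minGap (w : SignedPerm n) :
    2 * ∑ j : Fin n, minGap α β (w.word j.castSucc) (w.word j.succ) +
      minGap α β (w.word (Fin.last n)) (-w.word (Fin.last n)) =
      (2 * n + 1) * α + (β - α) * flagAscents w := by
  have hsum : ∑ j : Fin n, minGap α β (w.word j.castSucc) (w.word j.succ) = n * α + (β - α) *
      (Finset.univ.filter fun j : Fin n =>
        (w.word j.castSucc).label < (w.word j.succ).label).card := by
    have hgap (e f : Letter n) : minGap α β e f = α + if e.label < f.label then β - α else 0 := by
      unfold minGap
      split_ifs <;> ring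
    simp only [hgap, Finset.sum_add_distrib, Finset.sum_const, Finset.card_fin, ← Finset.sum_filter,
      nsmul_eq_mul, mul_comm]
  rw [hsum]
  simp only [minGap, flagAscents, Letter.label_neg, lt_neg_self_iff]
  split_ifs <;> ring

theorem isSpaced_iff (w : SignedPerm n) (p : Fin (n + 1) → ℤ) :
    IsSpaced q α β w p ↔ p 0 = 0 ∧
      (∀ j : Fin n, p j.castSucc + minGap α β (w.word j.castSucc) (w.word j.succ) ≤ p j.succ) ∧
      p (Fin.last n) ≤ ∑ j : Fin n, minGap α β (w.word j.castSucc) (w.word j.succ) +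
        (q - ((2 * n + 1) * α + (β - α) * flagAscents w)) / 2 := by
  have hlast : Clears α β (p (Fin.last n), w.word (Fin.last n))
      (q - p (Fin.last n), -w.word (Fin.last n)) ↔
      p (Fin.last n) ≤ ∑ j : Fin n, minGap α β (w.word j.castSucc) (w.word j.succ) +
        (q - ((2 * n + 1) * α + (β - α) * flagAscents w)) / 2 := by
    rw [← two_mul_sum_minGap_add_minGap w]
    simp only [Clears]
    omega
  rw [← hlast]
  exact ⟨fun h => ⟨h.zero, h.step, h.last⟩, fun h => ⟨h.1, h.2.1, h.2.2⟩⟩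

theorem natCard_isSpaced (w : SignedPerm n)
    (hq : (2 * n + 1) * α + (β - α) * flagAscents w ≤ q) :
    (Nat.card {p : Fin (n + 1) → ℤ // IsSpaced q α β w p} : ℚ) = (preHilbertPoly ℚ n 0).eval
      (((q - ((2 * n + 1) * α + (β - α) * flagAscents w)) / 2 : ℤ) : ℚ) := by
  obtain ⟨m, hm⟩ := Int.eq_ofNat_of_zero_le (Int.ediv_nonneg (sub_nonneg.2 hq) zero_le_two)
  simp only [isSpaced_iff, hm]
  rw [natCard_gap_le, Int.cast_natCast, preHilbertPoly_eq_choose_sub_add _ _ (Nat.zero_le m),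
    Nat.sub_zero]

/-- The quasi-polynomial in `m` that counts, for `β - α = c` and large `q = m + (2 * n + 1) * α`,
the pairs of a signed permutation and a spacing of it. -/
noncomputable def spacingCount (n : ℕ) (c m : ℤ) : ℚ :=
  halfFloorSum (preHilbertPoly ℚ n 0) (flagAscents (n := n)) c m

theorem sum_natCard_isSpaced (hαβ : α ≤ β) (hq : (2 * n + 1) * β ≤ q) :
    ∑ w : SignedPerm n, (Nat.card {p : Fin (n + 1) → ℤ // IsSpaced q α β w p} : ℚ) =
      spacingCount n (β - α) (q - (2 * n + 1) * α) := by
  refine Finset.sum_congr rfl fun w _ => ?_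
  rw [natCard_isSpaced, sub_add_eq_sub_sub]
  nlinarith [flagAscents_le w]

theorem N_BC_eq_spacingCount (hn : 0 < n) (hα : 1 ≤ α) (hαβ : α ≤ β) (hq : (2 * n + 1) * β ≤ q) :
    (N_BC n q (1 - α) (β - 1) : ℚ) = spacingCount n (β - α) (q - (2 * n + 1) * α) := by
  have : NeZero q := ⟨by
    rintro rfl
    exact hq.not_gt (mul_pos (by positivity) (zero_lt_one.trans_le (hα.trans hαβ)))⟩
  have hα' : 0 ≤ α := by linarith
  have hiff (w : SignedPerm n) (p : Fin (n + 1) → ℤ) : IsSpaced q α β w p ↔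
      IsSpaced q 0 1 w p ∧
        (w.tuple fun j => (p j : ZMod q)) ∈ admissibleTuples n q (1 - α) (β - 1) :=
    ⟨fun h => ⟨h.mono hα' (hα.trans hαβ), h.tuple_mem_admissibleTuples hα' hαβ⟩,
      fun h => h.1.of_mem_admissibleTuples hn hα (hα.trans hαβ) h.2⟩
  rw [← sum_natCard_isSpaced hαβ hq, ← Nat.cast_sum, ← ncard_eq_sum_natCard_isSpaced _ hiff]
  rfl

theorem spacingCount_one_eq_pow (hq : 2 * n + 1 ≤ q) : spacingCount n 1 q = (q : ℚ) ^ n := by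
  have : NeZero q := ⟨by omega⟩
  have hcount := sum_natCard_isSpaced (n := n) (q := q) zero_le_one
    (by rw [mul_one]; exact_mod_cast hq)
  rw [← Nat.cast_sum, ← ncard_eq_sum_natCard_isSpaced Set.univ (by simp)] at hcount
  simpa using hcount.symm

end Counting

section Shift

variable {n : ℕ} {P Q : ℚ[X]}

theorem eq_comp_X_sub_C_of_eventually_odd {t : ℚ}
    (h : ∀ᶠ q : ℕ in Filter.atTop, Odd q → P.eval (q : ℚ) = Q.eval (q - t)) :
    P = Q.comp (X - C t) :=
  eq_of_frequently_eval_natCast_eq <| (Nat.frequently_odd.and_eventually h).mono fun q hq => by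
    rw [hq.2 hq.1, eval_comp, eval_sub, eval_X, eval_C]

theorem eventually_eval_eq_spacingCount (hn : 0 < n) {a b : ℤ} (ha : 0 ≤ a) (hab : a ≤ b)
    (hP : ∃ M : ℕ, ∀ q : ℕ, Odd q → M < q → P.eval (q : ℚ) = (N_BC n q (-a) b : ℚ)) :
    ∀ᶠ q : ℕ in Filter.atTop,
      Odd q → P.eval (q : ℚ) = spacingCount n (b - a) (q - (2 * n + 1) * (a + 1)) := by
  obtain ⟨M, hP⟩ := hP
  have hlarge := tendsto_natCast_atTop_atTop.eventually_ge_atTop ((2 * n + 1) * (b + 1))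
  filter_upwards [Filter.eventually_gt_atTop M, hlarge] with q hM hq hodd
  have hcount := N_BC_eq_spacingCount hn (α := a + 1) (β := b + 1) (by linarith) (by linarith) hq
  rw [hP q hodd hM, ← add_sub_add_right_eq_sub b a 1, ← hcount]
  simp

theorem exists_eval_eq_spacingCount_of_odd (n : ℕ) {c : ℤ} (hc : Odd c) :
    ∃ S : ℚ[X], ∀ m : ℤ, S.eval (m : ℚ) = spacingCount n c m := by
  refine exists_eval_eq_halfFloorSum_of_odd (R := X ^ n) ?_ hc
  filter_upwards [Filter.eventually_ge_atTop (2 * n + 1)] with q hq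
  rw [eval_pow, eval_X]
  exact (spacingCount_one_eq_pow hq).symm

theorem eq_comp_of_eval_eq_spacingCount_of_odd {c t₁ t₂ : ℤ} (hc : Odd c)
    (hP : ∀ᶠ q : ℕ in Filter.atTop, Odd q → P.eval (q : ℚ) = spacingCount n c (q - t₁))
    (hQ : ∀ᶠ q : ℕ in Filter.atTop, Odd q → Q.eval (q : ℚ) = spacingCount n c (q - t₂)) :
    P = Q.comp (X - C ((t₁ - t₂ : ℤ) : ℚ)) := by
  obtain ⟨S, hS⟩ := exists_eval_eq_spacingCount_of_odd n hc
  have hcomp {T : ℚ[X]} {t : ℤ}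
      (hT : ∀ᶠ q : ℕ in Filter.atTop, Odd q → T.eval (q : ℚ) = spacingCount n c (q - t)) :
      T = S.comp (X - C (t : ℚ)) := by
    refine eq_comp_X_sub_C_of_eventually_odd (hT.mono fun q hq hodd => ?_)
    rw [hq hodd, ← hS]
    push_cast
    rfl
  rw [hcomp hP, hcomp hQ]
  simp only [comp_assoc, sub_comp, X_comp, C_comp, sub_sub, ← C_add]
  rw [← Int.cast_add, sub_add_cancel]

theorem eq_comp_of_eval_eq_spacingCount_of_even {c t₁ t₂ : ℤ} {s : ℕ} (hs : Even s)
    (hP : ∀ᶠ q : ℕ in Filter.atTop, Odd q → P.eval (q : ℚ) = spacingCount n c (q - t₁))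
    (hQ : ∀ᶠ q : ℕ in Filter.atTop, Odd q → Q.eval (q : ℚ) = spacingCount n c (q - t₂))
    (hshift : ∀ k : ℤ, Odd k → spacingCount n c (k + s - t₁) = spacingCount n c (k - t₂)) :
    P = Q.comp (X - C (s : ℚ)) := by
  refine eq_comp_X_sub_C_of_eventually_odd ?_
  filter_upwards [hP, (Filter.tendsto_sub_atTop_nat s).eventually hQ,
    Filter.eventually_ge_atTop s] with q hPq hQq hsq hodd
  have hodd' : Odd (q - s) := Nat.Odd.sub_even hsq hodd hs
  rw [hPq hodd, ← Nat.cast_sub hsq, hQq hodd', ← hshift _ (mod_cast hodd'), Nat.cast_sub hsq,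
    sub_add_cancel]

end Shift

/-- Proposition 5.3 for type `BC`. With `s = (2n+1)a + 1` if `a` and
`b` are both odd and `s = (2n+1)a` otherwise: if `P` interpolates `N_BC(n,·,-a,b)`
and `Q` interpolates `N_BC(n,·,0,b-a)` on large odd integers, then `P(X) = Q(X-s)`. -/
theorem statement16 (n : ℕ) (hn : 2 ≤ n) (a b : ℕ) (hab : a ≤ b)
    (s : ℕ) (hs : s = if Odd a ∧ Odd b then (2 * n + 1) * a + 1 else (2 * n + 1) * a)
    (P Q : ℚ[X])
    (hP : ∃ M : ℕ, ∀ q : ℕ, Odd q → M < q → P.eval (q : ℚ) = (N_BC n q (-(a : ℤ)) (b : ℤ) : ℚ))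
    (hQ : ∃ M : ℕ, ∀ q : ℕ, Odd q → M < q → Q.eval (q : ℚ) = (N_BC n q 0 ((b : ℤ) - (a : ℤ)) : ℚ)) :
    P = Q.comp (X - C (s : ℚ)) := by
  have hn0 : 0 < n := by omega
  have hPcount := eventually_eval_eq_spacingCount hn0 (Int.natCast_nonneg a) (mod_cast hab) hP
  have hQcount := eventually_eval_eq_spacingCount hn0 (a := 0) (b := b - a) le_rfl
    (sub_nonneg.2 (mod_cast hab)) (by simpa using hQ)
  rw [sub_zero] at hQcount
  rcases Nat.even_or_odd a with ha | ha
  · rw [if_neg fun h => Nat.not_odd_iff_even.2 ha h.1] at hs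
    refine eq_comp_of_eval_eq_spacingCount_of_even (hs ▸ ha.mul_left _) hPcount hQcount
      fun k _ => congrArg _ ?_
    push_cast [hs]
    ring
  rcases Nat.even_or_odd b with hb | hb
  · rw [if_neg fun h => Nat.not_odd_iff_even.2 hb h.2] at hs
    convert eq_comp_of_eval_eq_spacingCount_of_odd (hb.natCast.sub_odd ha.natCast) hPcount hQcount
      using 4
    push_cast [hs]
    ring
  · rw [if_pos ⟨ha, hb⟩] at hs
    refine eq_comp_of_eval_eq_spacingCount_of_even
      (hs ▸ ((odd_two_mul_add_one n).mul ha).add_one) hPcount hQcount fun k hk => ?_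
    have hm : Even (k - (2 * n + 1) * (0 + 1)) := hk.sub_odd (by simp)
    refine Eq.trans (congrArg _ ?_) (halfFloorSum_add_one (hb.natCast.sub_odd ha.natCast) hm)
    push_cast [hs]
    ring
end

section
/- Let n \ge 2 and a \ge 1 be integers, and write (1 + y + y^2 + ... + y^a)^n = \sum_{k=0}^{na} c_k y^k. Then every complex root of the polynomial P(X) := \sum_{k=0}^{na} c_k (X - k)^{n-1} \in \mathbb{C}[X] has real part equal to na/2. -/
open Polynomial

/-!
Let `T f = f(X - 1)` and `g = 1 + y + ⋯ + y ^ a`. The polynomial in question is `g(T) ^ n` applied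
to a power of `X`, and `g(T) ^ n` is a product of operators `T - ω` with `‖ω‖ = 1` and `ω ≠ 1`. If
all roots of a nonconstant `f` lie on a vertical line, then `‖f‖` grows strictly with the distance
to that line along every horizontal line. A root `z` of `T f - ω f` satisfies
`‖f(z - 1)‖ = ‖f(z)‖`, so `z - 1` and `z` are mirror images in that line. Thus each factor moves the
line of roots to the right by `1/2`.
-/

lemma pow_taylor {R : Type*} [CommSemiring R] (t : R) (k : ℕ) :
    (taylor t : Module.End R R[X]) ^ k = taylor (k * t) := by
  induction k with
  | zero => rw [pow_zero, Nat.cast_zero, zero_mul, taylor_zero', Module.End.one_eq_id]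
  | succ k ih =>
    refine LinearMap.ext fun f ↦ ?_
    rw [pow_succ, Module.End.mul_apply, ih, taylor_taylor, Nat.cast_succ, add_one_mul]

lemma eval_aeval_taylor {R : Type*} [CommSemiring R] (t : R) (g f : R[X]) (x : R) :
    (aeval (taylor t) g f).eval x =
      ∑ k ∈ Finset.range (g.natDegree + 1), g.coeff k * f.eval (x + k * t) := by
  simp only [aeval_eq_sum_range, LinearMap.sum_apply, LinearMap.smul_apply, pow_taylor,
    eval_finsetSum, eval_smul, taylor_eval, smul_eq_mul]

lemma natDegree_geom_sum_X {R : Type*} [Semiring R] [Nontrivial R] (a : ℕ) :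
    (∑ j ∈ Finset.range (a + 1), (X : R[X]) ^ j).natDegree = a := by
  refine natDegree_eq_of_le_of_coeff_ne_zero ?_ ?_
  · exact natDegree_sum_le_of_forall_le _ _ fun j hj ↦
      (natDegree_X_pow_le j).trans (Finset.mem_range_succ_iff.mp hj)
  · simp [finsetSum_coeff, coeff_X_pow]

lemma norm_eq_one_and_ne_one_of_isRoot_geom_sum {a : ℕ} {ω : ℂ}
    (hω : (∑ j ∈ Finset.range (a + 1), (X : ℂ[X]) ^ j).IsRoot ω) : ‖ω‖ = 1 ∧ ω ≠ 1 := by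
  have hsum : ∑ j ∈ Finset.range (a + 1), ω ^ j = 0 := by
    simpa only [IsRoot, eval_finsetSum, eval_pow, eval_X] using hω
  constructor
  · have hpow : ω ^ (a + 1) = 1 := by
      rw [← sub_eq_zero, ← geom_sum_mul, hsum, zero_mul]
    exact Complex.norm_eq_one_of_pow_eq_one hpow a.succ_ne_zero
  · rintro rfl
    simp only [one_pow, Finset.sum_const, Finset.card_range, nsmul_one] at hsum
    exact a.succ_ne_zero (Nat.cast_eq_zero.mp hsum)

/-- All complex roots of `f` have real part `r`. Since every complex number is a root of `0`, the
zero polynomial is excluded. -/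
def RootsOnVerticalLine (r : ℝ) (f : ℂ[X]) : Prop :=
  ∀ z, f.IsRoot z → z.re = r

namespace RootsOnVerticalLine

variable {r : ℝ} {f g : ℂ[X]}

lemma ne_zero (hf : RootsOnVerticalLine r f) : f ≠ 0 := by
  rintro rfl
  have hre : ((r + 1 : ℝ) : ℂ).re = r := hf _ eval_zero
  simp at hre

lemma X_pow (m : ℕ) : RootsOnVerticalLine 0 (X ^ m) := by
  intro z hz
  rw [IsRoot, eval_pow, eval_X] at hz
  rw [eq_zero_of_pow_eq_zero hz, Complex.zero_re]

lemma const_smul (hf : RootsOnVerticalLine r f) {b : ℂ} (hb : b ≠ 0) :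
    RootsOnVerticalLine r (b • f) := by
  intro z hz
  rw [IsRoot, eval_smul, smul_eq_mul] at hz
  exact hf z ((mul_eq_zero.mp hz).resolve_left hb)

lemma norm_eval_lt_norm_eval (hf : RootsOnVerticalLine r f) (hdeg : f.natDegree ≠ 0) {u v : ℂ}
    (him : u.im = v.im) (hre : |u.re - r| < |v.re - r|) : ‖f.eval u‖ < ‖f.eval v‖ := by
  have hv : f.eval v ≠ 0 := by
    intro h
    rw [hf v h, sub_self, abs_zero] at hre
    exact hre.not_ge (abs_nonneg _)
  by_cases hu : f.eval u = 0
  · rwa [hu, norm_zero, norm_pos_iff]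
  have hfactor (ρ : ℂ) (hρ : ρ ∈ f.roots) : ‖u - ρ‖ < ‖v - ρ‖ := by
    rw [← hf ρ (isRoot_of_mem_roots hρ), ← sq_lt_sq] at hre
    rw [← sq_lt_sq₀ (norm_nonneg _) (norm_nonneg _), Complex.sq_norm, Complex.sq_norm,
      Complex.normSq_apply, Complex.normSq_apply]
    simp only [Complex.sub_re, Complex.sub_im, him]
    linarith
  have hfactor_pos (ρ : ℂ) (hρ : ρ ∈ f.roots) : 0 < ‖u - ρ‖ := by
    rw [norm_pos_iff, sub_ne_zero]
    rintro rfl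
    exact hu (isRoot_of_mem_roots hρ)
  have hroots : f.roots ≠ 0 := by
    rwa [← Multiset.card_pos, ← (IsAlgClosed.splits f).natDegree_eq_card_roots, Nat.pos_iff_ne_zero]
  have norm_eval (w : ℂ) :
      ‖f.eval w‖ = ‖f.leadingCoeff‖ * (f.roots.map fun ρ ↦ ‖w - ρ‖).prod := by
    rw [(IsAlgClosed.splits f).eval_eq_prod_roots, norm_mul]
    congr 1
    simpa using map_multiset_prod (normHom : ℂ →*₀ ℝ) (f.roots.map (w - ·))
  rw [norm_eval, norm_eval]
  exact mul_lt_mul_of_pos_left (Multiset.prod_map_lt_prod_map hroots _ _ hfactor_pos hfactor)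
    (norm_pos_iff.mpr (leadingCoeff_ne_zero.mpr hf.ne_zero))

lemma abs_re_sub_eq (hf : RootsOnVerticalLine r f) (hdeg : f.natDegree ≠ 0) {u v : ℂ}
    (him : u.im = v.im) (h : ‖f.eval u‖ = ‖f.eval v‖) : |u.re - r| = |v.re - r| := by
  by_contra hne
  rcases lt_or_gt_of_ne hne with hlt | hgt
  · exact (hf.norm_eval_lt_norm_eval hdeg him hlt).ne h
  · exact (hf.norm_eval_lt_norm_eval hdeg him.symm hgt).ne' h

lemma taylor_sub_smul (hf : RootsOnVerticalLine r f) (t : ℝ) {ω : ℂ} (hω : ‖ω‖ = 1)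
    (hω₁ : ω ≠ 1) : RootsOnVerticalLine (r - t / 2) (taylor (t : ℂ) f - ω • f) := by
  intro z hz
  have hshift : f.eval (z + t) = ω * f.eval z := by
    rwa [IsRoot, eval_sub, taylor_eval, eval_smul, smul_eq_mul, sub_eq_zero] at hz
  have hdeg : f.natDegree ≠ 0 := by
    intro h
    obtain ⟨b, rfl⟩ := natDegree_eq_zero.mp h
    rw [eval_C, eval_C, eq_comm, mul_eq_right₀ (C_ne_zero.mp hf.ne_zero)] at hshift
    exact hω₁ hshift
  have hdist : |(z + t).re - r| = |z.re - r| :=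
    hf.abs_re_sub_eq hdeg (by simp) (by rw [hshift, norm_mul, hω, one_mul])
  rw [Complex.add_re, Complex.ofReal_re] at hdist
  rcases abs_eq_abs.mp hdist with htranslate | hreflect
  · obtain rfl : t = 0 := by linarith
    have hroot : f.IsRoot z := by
      rw [Complex.ofReal_zero, add_zero, eq_comm] at hshift
      by_contra h
      exact hω₁ ((mul_eq_right₀ h).mp hshift)
    rw [hf z hroot, zero_div, sub_zero]
  · linarith

lemma aeval_taylor_prod_X_sub_C (hf : RootsOnVerticalLine r f) (t : ℝ) (s : Multiset ℂ)
    (hs : ∀ ω ∈ s, ‖ω‖ = 1 ∧ ω ≠ 1) :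
    RootsOnVerticalLine (r - s.card * t / 2)
      (aeval (taylor (t : ℂ)) (s.map fun ω ↦ X - C ω).prod f) := by
  induction s using Multiset.induction_on with
  | empty => simpa using hf
  | cons ω s ih =>
    obtain ⟨hω, hω₁⟩ := hs ω (Multiset.mem_cons_self ω s)
    have hstep := (ih fun ξ hξ ↦ hs ξ (Multiset.mem_cons_of_mem hξ)).taylor_sub_smul t hω hω₁
    rw [Multiset.map_cons, Multiset.prod_cons, map_mul, Module.End.mul_apply, Multiset.card_cons]
    simp only [map_sub, aeval_X, aeval_C, LinearMap.sub_apply, Module.algebraMap_end_apply]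
    convert hstep using 1
    push_cast
    ring

theorem aeval_taylor (hf : RootsOnVerticalLine r f) (t : ℝ)
    (hg : ∀ ω, g.IsRoot ω → ‖ω‖ = 1 ∧ ω ≠ 1) :
    RootsOnVerticalLine (r - g.natDegree * t / 2) (aeval (taylor (t : ℂ)) g f) := by
  have hg₀ : g ≠ 0 := by
    rintro rfl
    exact (hg 1 eval_zero).2 rfl
  have hsplits := IsAlgClosed.splits g
  have hprod := (hf.aeval_taylor_prod_X_sub_C t g.roots fun ω hω ↦
    hg ω (isRoot_of_mem_roots hω)).const_smul (leadingCoeff_ne_zero.mpr hg₀)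
  rw [← hsplits.natDegree_eq_card_roots] at hprod
  conv in aeval _ g => rw [hsplits.eq_prod_roots]
  rwa [← smul_eq_C_mul, map_smul, LinearMap.smul_apply]

end RootsOnVerticalLine

theorem statement18_general (n a m : ℕ) (c : ℕ → ℂ)
    (hc : ∀ k, c k = ((∑ j ∈ Finset.range (a + 1), (X : ℂ[X]) ^ j) ^ n).coeff k) (z : ℂ)
    (hz : (∑ k ∈ Finset.range (n * a + 1), C (c k) * (X - C (k : ℂ)) ^ m).eval z = 0) :
    z.re = n * a / 2 := by
  set g : ℂ[X] := (∑ j ∈ Finset.range (a + 1), X ^ j) ^ n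
  have hdeg : g.natDegree = n * a := by rw [natDegree_pow, natDegree_geom_sum_X]
  have hg (ω : ℂ) (hω : g.IsRoot ω) : ‖ω‖ = 1 ∧ ω ≠ 1 := by
    rw [IsRoot, eval_pow] at hω
    exact norm_eq_one_and_ne_one_of_isRoot_geom_sum (eq_zero_of_pow_eq_zero hω)
  have hroot : (aeval (taylor ((-1 : ℝ) : ℂ)) g (X ^ m)).IsRoot z := by
    rw [IsRoot, eval_aeval_taylor, hdeg, ← hz, eval_finsetSum]
    exact Finset.sum_congr rfl fun k _ ↦ by simp [hc, sub_eq_add_neg]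
  have hre := (RootsOnVerticalLine.X_pow m).aeval_taylor (-1) hg z hroot
  rw [hre, hdeg]
  push_cast
  ring

/-- the "Riemann hypothesis" for the extended Linial arrangement of
type `A_{n-1}`. Writing `(1 + y + ... + y^a)^n = ∑ c_k y^k`, every complex root of
`∑_k c_k (X - k)^(n-1)` has real part `na/2`. -/
theorem statement18 (n a : ℕ) (hn : 2 ≤ n) (ha : 1 ≤ a)
    (c : ℕ → ℂ)
    (hc : ∀ k, c k = (((∑ j ∈ Finset.range (a + 1), (X : ℂ[X]) ^ j)) ^ n).coeff k) :
    ∀ z : ℂ,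
      (∑ k ∈ Finset.range (n * a + 1), C (c k) * (X - C (k : ℂ)) ^ (n - 1)).eval z = 0 →
      z.re = (n : ℝ) * (a : ℝ) / 2 := by
  exact statement18_general n a (n - 1) c hc
end

section
/- Let n \ge 2 and a \ge 1 be integers. Define g(y) := y \cdot (1 + y^2 + y^4 + ... + y^{2a})^n \cdot (1 + y^2 + y^4 + ... + y^{a-1}) if a is odd, and g(y) := (1 + y^2 + y^4 + ... + y^{2a})^n \cdot (1 + y + y^2 + ... + y^a) if a is even; write g = \sum_k g_k y^k. Then every complex root of the polynomial P(X) := \sum_k g_k (X - k)^n \in \mathbb{C}[X] has real part equal to na + (a+1)/2 if a is odd, and equal to na + a/2 if a is even (in both cases, na + \lceil a/2 \rceil). -/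
open Polynomial

/-- `1 + y^2 + y^4 + ... + y^(2(m-1))`, over `ℂ`. -/
noncomputable def phi2C (m : ℕ) : ℂ[X] := ∑ i ∈ Finset.range m, X ^ (2 * i)

/-- `1 + y + y^2 + ... + y^(m-1)`, over `ℂ`. -/
noncomputable def phiC (m : ℕ) : ℂ[X] := ∑ i ∈ Finset.range m, X ^ i

/-- For `g = ∑_k g_k y^k`, the polynomial `∑_k g_k (X - k)^n`. -/
noncomputable def shiftPoly (g : ℂ[X]) (n : ℕ) : ℂ[X] :=
  ∑ k ∈ Finset.range (g.natDegree + 1), C (g.coeff k) * (X - C (k : ℂ)) ^ n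

/-!
Write `S` for the shift `f(x) ↦ f(x - 1)`, so that `∑ₖ gₖ (X - k)ⁿ = g(S) Xⁿ`. Suppose that all
roots of a nonconstant `f` have real part `c`. Along a horizontal line each factor `‖z - r‖` of
`‖f(z)‖` increases with the distance of `z` from the line `Re z = c`, so `‖f(z - 1)‖ = ‖f(z)‖`
forces `Re z = c + 1/2`. If `‖w‖ = 1`, every root of `(S - w) f` satisfies this equation, so
`S - w` moves the line of roots by `1/2`. Starting from `Xⁿ` and factoring `g`, each root of `g` on
the unit circle moves the line by `1/2` and each factor `X` moves it by `1`. This is the argument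
of Postnikov and Stanley.
-/

/-- The backward shift `f(x) ↦ f(x - 1)`, as an endomorphism so that polynomials can be evaluated
at it. -/
noncomputable def shiftOp : Module.End ℂ ℂ[X] := taylor (-1)

lemma eval_shiftOp (f : ℂ[X]) (z : ℂ) : (shiftOp f).eval z = f.eval (z - 1) := by
  simp [shiftOp, taylor_eval, sub_eq_add_neg]

lemma eval_shiftOp_pow (k : ℕ) (f : ℂ[X]) (z : ℂ) :
    ((shiftOp ^ k) f).eval z = f.eval (z - k) := by
  induction k generalizing z with
  | zero => simp
  | succ k ih =>
    rw [pow_succ', Module.End.mul_apply, eval_shiftOp, ih, sub_sub, Nat.cast_succ, add_comm]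

lemma aeval_shiftOp_X_sub_C (w : ℂ) (f : ℂ[X]) :
    aeval shiftOp (X - C w) f = shiftOp f - C w * f := by
  simp [Module.algebraMap_end_apply, smul_eq_C_mul]

lemma shiftPoly_eq_aeval_shiftOp (g : ℂ[X]) (n : ℕ) :
    shiftPoly g n = aeval shiftOp g (X ^ n) := by
  refine Polynomial.funext fun z => ?_
  simp [shiftPoly, aeval_eq_sum_range, eval_finsetSum, eval_shiftOp_pow, LinearMap.sum_apply]

lemma coeff_shiftPoly_self (g : ℂ[X]) (n : ℕ) : (shiftPoly g n).coeff n = g.eval 1 := by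
  have hmonic (r : ℂ) : ((X - C r) ^ n).coeff n = 1 := by
    simpa using ((monic_X_sub_C r).pow n).coeff_natDegree
  simp only [shiftPoly, finsetSum_coeff, coeff_C_mul, hmonic, eval_eq_sum_range, one_pow]

lemma shiftPoly_ne_zero {g : ℂ[X]} (hg : g.eval 1 ≠ 0) (n : ℕ) : shiftPoly g n ≠ 0 := by
  intro h
  rw [← coeff_shiftPoly_self g n, h, coeff_zero] at hg
  exact hg rfl

lemma norm_eval_eq_prod_roots {K : Type*} [NormedField K] {f : K[X]} (hf : f.Splits) (z : K) :
    ‖f.eval z‖ = ‖f.leadingCoeff‖ * (f.roots.map fun r => ‖z - r‖).prod := by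
  rw [hf.eval_eq_prod_roots, norm_mul, ← normHom_apply (Multiset.prod _),
    map_multiset_prod, Multiset.map_map]
  rfl

lemma norm_lt_norm_of_im_eq {u v : ℂ} (him : u.im = v.im) (hre : |u.re| < |v.re|) :
    ‖u‖ < ‖v‖ := by
  rw [Complex.norm_eq_sqrt_sq_add_sq, Complex.norm_eq_sqrt_sq_add_sq, him]
  exact Real.sqrt_lt_sqrt (by positivity) (by gcongr ?_ + _; exact sq_lt_sq.2 hre)

/-- All complex roots of `f` lie on the vertical line `Re z = c`. This excludes `f = 0`, whereas a
nonzero constant qualifies for every `c`. -/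
def RootsOnLine (c : ℝ) (f : ℂ[X]) : Prop :=
  ∀ z : ℂ, f.IsRoot z → z.re = c

namespace RootsOnLine

variable {c : ℝ} {f : ℂ[X]}

lemma X_pow (n : ℕ) : RootsOnLine 0 (X ^ n) := by
  intro z hz
  rw [IsRoot, eval_pow, eval_X] at hz
  rw [eq_zero_of_pow_eq_zero hz, Complex.zero_re]

lemma C_mul (hf : RootsOnLine c f) {b : ℂ} (hb : b ≠ 0) : RootsOnLine c (C b * f) := by
  intro z hz
  rw [IsRoot, eval_mul, eval_C, mul_eq_zero, or_iff_right hb] at hz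
  exact hf z hz

lemma norm_eval_lt (hf : RootsOnLine c f) (hdeg : f.natDegree ≠ 0) {u v : ℂ}
    (him : u.im = v.im) (hre : |u.re - c| < |v.re - c|) : ‖f.eval u‖ < ‖f.eval v‖ := by
  have hv : f.eval v ≠ 0 := fun h => by
    rw [hf v h, sub_self, abs_zero] at hre
    exact (abs_nonneg _).not_gt hre
  by_cases hu : f.eval u = 0
  · simpa [hu] using hv
  have hsplits := IsAlgClosed.splits f
  have hroots : f.roots ≠ 0 := by
    rwa [← Multiset.card_eq_zero.ne, ← hsplits.natDegree_eq_card_roots]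
  have hlc : f.leadingCoeff ≠ 0 := by
    intro hlc
    simp [leadingCoeff_eq_zero.1 hlc] at hdeg
  rw [norm_eval_eq_prod_roots hsplits, norm_eval_eq_prod_roots hsplits]
  refine mul_lt_mul_of_pos_left (Multiset.prod_map_lt_prod_map hroots _ _ ?_ ?_)
    (norm_pos_iff.2 hlc)
  · intro r hr
    refine norm_pos_iff.2 (sub_ne_zero.2 ?_)
    rintro rfl
    exact hu (isRoot_of_mem_roots hr)
  · intro r hr
    refine norm_lt_norm_of_im_eq (by simp [him]) ?_
    rwa [Complex.sub_re, Complex.sub_re, hf r (isRoot_of_mem_roots hr)]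

lemma abs_re_sub_eq_of_norm_eval_eq (hf : RootsOnLine c f) (hdeg : f.natDegree ≠ 0) {u v : ℂ}
    (him : u.im = v.im) (heq : ‖f.eval u‖ = ‖f.eval v‖) : |u.re - c| = |v.re - c| := by
  rcases lt_trichotomy |u.re - c| |v.re - c| with h | h | h
  · exact absurd heq (hf.norm_eval_lt hdeg him h).ne
  · exact h
  · exact absurd heq (hf.norm_eval_lt hdeg him.symm h).ne'

lemma shiftOp_sub_C_mul (hf : RootsOnLine c f) {w : ℂ} (hw : ‖w‖ = 1)
    (h0 : shiftOp f - C w * f ≠ 0) : RootsOnLine (c + 1 / 2) (shiftOp f - C w * f) := by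
  intro z hz
  rw [IsRoot, eval_sub, eval_shiftOp, eval_mul, eval_C, sub_eq_zero] at hz
  have hdeg : f.natDegree ≠ 0 := by
    intro hdeg
    obtain ⟨b, rfl⟩ := natDegree_eq_zero.1 hdeg
    rw [eval_C, eval_C] at hz
    apply h0
    rw [shiftOp, taylor_C, ← map_mul, ← hz, sub_self]
  have hnorm : ‖f.eval (z - 1)‖ = ‖f.eval z‖ := by rw [hz, norm_mul, hw, one_mul]
  have habs := hf.abs_re_sub_eq_of_norm_eval_eq hdeg (by simp) hnorm
  rw [Complex.sub_re, Complex.one_re] at habs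
  rcases abs_eq_abs.1 habs with h | h <;> linarith

lemma shiftOp_pow (hf : RootsOnLine c f) (k : ℕ) : RootsOnLine (c + k) ((shiftOp ^ k) f) := by
  intro z hz
  rw [IsRoot, eval_shiftOp_pow] at hz
  have := hf _ hz
  rw [Complex.sub_re, Complex.natCast_re] at this
  linarith

lemma aeval_shiftOp_prod_X_sub_C (hf : RootsOnLine c f) (s : Multiset ℂ) (hs : ∀ w ∈ s, ‖w‖ = 1)
    (h0 : aeval shiftOp (s.map fun w => X - C w).prod f ≠ 0) :
    RootsOnLine (c + s.card / 2) (aeval shiftOp (s.map fun w => X - C w).prod f) := by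
  induction s using Multiset.induction_on with
  | empty => simpa using hf
  | cons w s ih =>
    rw [Multiset.map_cons, Multiset.prod_cons, map_mul, Module.End.mul_apply] at h0 ⊢
    have hline := ih (fun v hv => hs v (Multiset.mem_cons_of_mem hv)) fun h => h0 (by simp [h])
    rw [aeval_shiftOp_X_sub_C] at h0 ⊢
    convert hline.shiftOp_sub_C_mul (hs w (Multiset.mem_cons_self w s)) h0 using 1
    rw [Multiset.card_cons, Nat.cast_succ]
    ring

end RootsOnLine

/-- All complex roots of `g` have absolute value `1`. This excludes `g = 0`, whereas nonzero
constants qualify. -/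
def RootsOnUnitCircle (g : ℂ[X]) : Prop :=
  ∀ w : ℂ, g.IsRoot w → ‖w‖ = 1

namespace RootsOnUnitCircle

variable {g h : ℂ[X]}

lemma ne_zero (hg : RootsOnUnitCircle g) : g ≠ 0 := by
  rintro rfl
  simpa using hg 0 eval_zero

lemma mul (hg : RootsOnUnitCircle g) (hh : RootsOnUnitCircle h) : RootsOnUnitCircle (g * h) :=
  fun w hw => (root_mul.1 hw).elim (hg w) (hh w)

lemma pow (hg : RootsOnUnitCircle g) (n : ℕ) : RootsOnUnitCircle (g ^ n) := by
  intro w hw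
  rw [IsRoot, eval_pow] at hw
  exact hg w (eq_zero_of_pow_eq_zero hw)

lemma expand (hg : RootsOnUnitCircle g) {k : ℕ} (hk : k ≠ 0) :
    RootsOnUnitCircle (expand ℂ k g) := by
  intro w hw
  rw [IsRoot, expand_eval] at hw
  have hnorm := hg _ hw
  rwa [norm_pow, pow_eq_one_iff_of_nonneg (norm_nonneg w) hk] at hnorm

theorem rootsOnLine_aeval_shiftOp (hg : RootsOnUnitCircle g) {c : ℝ} {f : ℂ[X]}
    (hf : RootsOnLine c f) (h0 : aeval shiftOp g f ≠ 0) :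
    RootsOnLine (c + g.natDegree / 2) (aeval shiftOp g f) := by
  have hsplits := IsAlgClosed.splits g
  have hfactor : aeval shiftOp g f =
      C g.leadingCoeff * aeval shiftOp (g.roots.map fun w => X - C w).prod f := by
    conv_lhs => rw [hsplits.eq_prod_roots]
    rw [map_mul, aeval_C, Module.End.mul_apply, Module.algebraMap_end_apply, smul_eq_C_mul]
  rw [hfactor] at h0 ⊢
  rw [hsplits.natDegree_eq_card_roots]
  exact (hf.aeval_shiftOp_prod_X_sub_C g.roots (fun w hw => hg w (isRoot_of_mem_roots hw))
    (right_ne_zero_of_mul h0)).C_mul (leadingCoeff_ne_zero.2 hg.ne_zero)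

theorem rootsOnLine_shiftPoly (hg : RootsOnUnitCircle g) {k n : ℕ}
    (h0 : shiftPoly (X ^ k * g) n ≠ 0) :
    RootsOnLine (k + g.natDegree / 2) (shiftPoly (X ^ k * g) n) := by
  have hcomp : shiftPoly (X ^ k * g) n = (shiftOp ^ k) (aeval shiftOp g (X ^ n)) := by
    rw [shiftPoly_eq_aeval_shiftOp, map_mul, Module.End.mul_apply, aeval_X_pow]
  rw [hcomp] at h0 ⊢
  have hg0 : aeval shiftOp g (X ^ n) ≠ 0 := fun h => h0 (by rw [h, map_zero])
  convert (hg.rootsOnLine_aeval_shiftOp (.X_pow n) hg0).shiftOp_pow k using 1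
  ring

end RootsOnUnitCircle

lemma phiC_mul_X_sub_one (m : ℕ) : phiC m * (X - 1) = X ^ m - 1 :=
  geom_sum_mul X m

lemma eval_one_phiC (m : ℕ) : (phiC m).eval 1 = m := by
  simp [phiC, eval_finsetSum]

lemma natDegree_phiC (m : ℕ) : (phiC m).natDegree = m - 1 := by
  rcases eq_or_ne m 0 with rfl | hm
  · simp [phiC]
  have hdeg := congrArg natDegree (phiC_mul_X_sub_one m)
  have hmonic : (phiC m).Monic := monic_geom_sum_X hm
  rw [← C_1, hmonic.natDegree_mul (monic_X_sub_C 1), natDegree_X_sub_C,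
    natDegree_X_pow_sub_C] at hdeg
  exact Nat.eq_sub_of_add_eq hdeg

lemma rootsOnUnitCircle_phiC {m : ℕ} (hm : m ≠ 0) : RootsOnUnitCircle (phiC m) := by
  intro w hw
  have hpow := congrArg (eval w) (phiC_mul_X_sub_one m)
  rw [eval_mul, hw.eq_zero, zero_mul, eval_sub, eval_pow, eval_X, eval_one, eq_comm,
    sub_eq_zero] at hpow
  exact Complex.norm_eq_one_of_pow_eq_one hpow hm

lemma phi2C_eq_expand (m : ℕ) : phi2C m = expand ℂ 2 (phiC m) := by
  simp [phi2C, phiC, pow_mul]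

lemma eval_one_phi2C (m : ℕ) : (phi2C m).eval 1 = m := by
  rw [phi2C_eq_expand, expand_eval, one_pow, eval_one_phiC]

lemma natDegree_phi2C (m : ℕ) : (phi2C m).natDegree = (m - 1) * 2 := by
  rw [phi2C_eq_expand, natDegree_expand, natDegree_phiC]

lemma rootsOnUnitCircle_phi2C {m : ℕ} (hm : m ≠ 0) : RootsOnUnitCircle (phi2C m) := by
  rw [phi2C_eq_expand]
  exact (rootsOnUnitCircle_phiC hm).expand two_ne_zero

/-- the "Riemann hypothesis" for the extended Linial arrangement of
type `BC_n`. With `g = y (1 + y^2 + ... + y^(2a))^n (1 + y^2 + ... + y^(a-1))` for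
odd `a` and `g = (1 + y^2 + ... + y^(2a))^n (1 + y + ... + y^a)` for even `a`,
every complex root of `∑_k g_k (X - k)^n` has real part `na + (a+1)/2` resp.
`na + a/2`. -/
theorem statement19 (n a : ℕ) (hn : 2 ≤ n) (ha : 1 ≤ a) :
    (Odd a → ∀ z : ℂ,
      (shiftPoly (X * (phi2C (a + 1)) ^ n * phi2C ((a + 1) / 2)) n).eval z = 0 →
      z.re = (n : ℝ) * (a : ℝ) + ((a : ℝ) + 1) / 2) ∧
    (Even a → ∀ z : ℂ,
      (shiftPoly ((phi2C (a + 1)) ^ n * phiC (a + 1)) n).eval z = 0 →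
      z.re = (n : ℝ) * (a : ℝ) + (a : ℝ) / 2) := by
  have hp := (rootsOnUnitCircle_phi2C a.succ_ne_zero).pow n
  constructor
  · rintro ⟨b, rfl⟩ z hz
    rw [show (2 * b + 1 + 1) / 2 = b + 1 by lia, mul_assoc, ← pow_one X] at hz
    have hq := rootsOnUnitCircle_phi2C b.succ_ne_zero
    have hne : (X ^ 1 * (phi2C (2 * b + 1 + 1) ^ n * phi2C (b + 1))).eval 1 ≠ 0 := by
      simp only [eval_mul, eval_pow, eval_X, eval_one_phi2C]
      exact_mod_cast by positivity
    rw [(hp.mul hq).rootsOnLine_shiftPoly (shiftPoly_ne_zero hne n) z hz,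
      natDegree_mul hp.ne_zero hq.ne_zero, natDegree_pow, natDegree_phi2C, natDegree_phi2C]
    push_cast [Nat.add_sub_cancel]
    ring
  · intro _ z hz
    rw [← one_mul (_ * _), ← pow_zero X] at hz
    have hq := rootsOnUnitCircle_phiC a.succ_ne_zero
    have hne : (X ^ 0 * (phi2C (a + 1) ^ n * phiC (a + 1))).eval 1 ≠ 0 := by
      simp only [eval_mul, eval_pow, eval_X, eval_one_phi2C, eval_one_phiC]
      exact_mod_cast by positivity
    rw [(hp.mul hq).rootsOnLine_shiftPoly (shiftPoly_ne_zero hne n) z hz,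
      natDegree_mul hp.ne_zero hq.ne_zero, natDegree_pow, natDegree_phi2C, natDegree_phiC]
    push_cast [Nat.add_sub_cancel]
    ring
end
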